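/- arXiv:0707.3950 — 4 statements merged into one kernel-verified Lean document; each statement's English description precedes it below -/
import Mathlib

section
/- Let m := n(n+1)/2 denote the n-th triangular number, and for every integer p ≥ 1 define R_p := ((-1)^(p-1)/(2p·8^p))·(1 + ∑_{k=1}^p C(p,k)·(-4)^k·B_{2k}(1/2)), where B_{2k}(x) is the Bernoulli polynomial of order 2k. Then for every positive integer n and every integer r ≥ 1 there exists Θ_r with 0 < Θ_r < 1 such that H_n = (1/2)·ln(2m) + γ + ∑_{p=1}^r R_p/m^p + Θ_r · R_{r+1}/m^{r+1}. -/
open Real Finset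

/-- The coefficient `R_p` in Ramanujan's expansion of the harmonic number into
negative powers of the `n`-th triangular number. -/
noncomputable def ramanujanCoeff (p : ℕ) : ℝ :=
  ((-1 : ℝ) ^ (p - 1) / (2 * p * 8 ^ p)) *
    (1 + ∑ k ∈ Finset.Icc 1 p,
      (p.choose k : ℝ) * (-4 : ℝ) ^ k *
        (((Polynomial.bernoulli (2 * k)).eval ((1 : ℚ) / 2) : ℚ) : ℝ))

/-!
Write `F x = ∫ t in Ioi 0, 2 * t / ((exp (2 * π * t) + 1) * (x ^ 2 + t ^ 2))`. As a Laplace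
transform, `F` has kernel `1 / s - 1 / (2 * sinh (s / 2))`, so `F x - F (x + 1)` is an elementary
Frullani integral and telescoping gives `harmonic n = γ + log x + F x` at `x = n + 1 / 2`. Since
`x ^ 2 + t ^ 2 = n * (n + 1) + (t ^ 2 + 1 / 4)`, the quantity
`harmonic n - γ - log (n * (n + 1)) / 2` is the Stieltjes transform `∫ c, 1 / (n * (n + 1) + c) ∂ν`
of a fixed measure `ν` on the positive half-line. Expanding the integrand as a geometric series
yields an alternating sum of moments of `ν`. These are combinations of the values `B_{2k}(1/2)`
because the odd moments of `1 / (exp (2 * π * t) + 1)` are alternating zeta values. By the mean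
value theorem for integrals, the remainder is a fraction strictly between `0` and `1` of the first
omitted term.
-/

open MeasureTheory Filter Topology Set

/-! ### Exponential integrals -/

theorem integral_pow_mul_exp_neg_mul_Ioi (k : ℕ) {a : ℝ} (ha : 0 < a) :
    ∫ t in Ioi (0 : ℝ), t ^ k * exp (-(a * t)) = (k.factorial : ℝ) / a ^ (k + 1) := by
  have h := Real.integral_rpow_mul_exp_neg_mul_Ioi (a := k + 1) (by positivity) ha
  simp only [add_sub_cancel_right, rpow_natCast, Gamma_nat_eq_factorial] at h
  rw [h, ← Nat.cast_add_one, rpow_natCast, one_div, inv_pow, inv_mul_eq_div]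

theorem integrableOn_pow_mul_exp_neg_mul_Ioi (k : ℕ) {a : ℝ} (ha : 0 < a) :
    IntegrableOn (fun t : ℝ ↦ t ^ k * exp (-(a * t))) (Ioi 0) := by
  refine Integrable.of_integral_ne_zero ?_
  rw [integral_pow_mul_exp_neg_mul_Ioi k ha]
  positivity

theorem integral_exp_neg_mul_Ioi {a : ℝ} (ha : 0 < a) :
    ∫ t in Ioi (0 : ℝ), exp (-(a * t)) = 1 / a := by
  simpa using integral_pow_mul_exp_neg_mul_Ioi 0 ha

theorem integrableOn_exp_neg_mul_Ioi {a : ℝ} (ha : 0 < a) :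
    IntegrableOn (fun t : ℝ ↦ exp (-(a * t))) (Ioi 0) := by
  simpa using integrableOn_pow_mul_exp_neg_mul_Ioi 0 ha

theorem integral_sin_mul_exp_neg_mul_Ioi (s : ℝ) {a : ℝ} (ha : 0 < a) :
    ∫ t in Ioi (0 : ℝ), sin (s * t) * exp (-(a * t)) = s / (s ^ 2 + a ^ 2) := by
  have hre : (-a + s * Complex.I : ℂ).re < 0 := by simpa using ha
  have him (t : ℝ) : RCLike.im (Complex.exp ((-a + s * Complex.I : ℂ) * t)) =
      sin (s * t) * exp (-(a * t)) := by
    rw [RCLike.im_to_complex, Complex.exp_im]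
    simp [mul_comm]
  have h := integral_im (𝕜 := ℂ) (integrableOn_exp_mul_complex_Ioi hre 0)
  simp only [him, integral_exp_mul_complex_Ioi hre 0] at h
  rw [h]
  simp only [Complex.ofReal_zero, mul_zero, Complex.exp_zero, RCLike.im_to_complex,
    Complex.div_im, Complex.normSq_apply, Complex.neg_im, Complex.neg_re, Complex.add_im,
    Complex.add_re, Complex.mul_im, Complex.mul_re, Complex.ofReal_re, Complex.ofReal_im,
    Complex.I_re, Complex.I_im, Complex.one_re, Complex.one_im]
  ring

theorem exp_neg_sub_exp_neg_le {u v : ℝ} : exp (-u) - exp (-v) ≤ (v - u) * exp (-u) := by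
  have hv : exp (-v) = exp (-u) * exp (u - v) := by rw [← exp_add]; ring_nf
  nlinarith [add_one_le_exp (u - v), exp_pos (-u)]

theorem integrableOn_inv_mul_exp_neg_sub_exp_neg_Ioi {a b : ℝ} (ha : 0 < a) (hb : 0 < b) :
    IntegrableOn (fun s ↦ s⁻¹ * (exp (-(a * s)) - exp (-(b * s)))) (Ioi 0) := by
  wlog hab : a ≤ b generalizing a b
  · refine (this hb ha (le_of_not_ge hab)).neg.congr (ae_of_all _ fun s ↦ ?_)
    simp only [Pi.neg_apply]
    ring
  refine ((integrableOn_exp_neg_mul_Ioi ha).const_mul (b - a)).mono'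
    (Measurable.aestronglyMeasurable (by fun_prop)) ?_
  filter_upwards [ae_restrict_mem measurableSet_Ioi] with s (hs : 0 < s)
  have hle : exp (-(b * s)) ≤ exp (-(a * s)) := by gcongr
  rw [norm_of_nonneg (mul_nonneg (by positivity) (sub_nonneg.2 hle)), inv_mul_le_iff₀ hs]
  calc exp (-(a * s)) - exp (-(b * s)) ≤ (b * s - a * s) * exp (-(a * s)) := exp_neg_sub_exp_neg_le
    _ = s * ((b - a) * exp (-(a * s))) := by ring

theorem integral_inv_mul_exp_neg_sub_exp_neg_Ioi {a b : ℝ} (ha : 0 < a) (hb : 0 < b) :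
    ∫ s in Ioi (0 : ℝ), s⁻¹ * (exp (-(a * s)) - exp (-(b * s))) = log (b / a) := by
  have hcont : Continuous fun s : ℝ ↦ exp (-s) := by fun_prop
  have hzero : Tendsto (fun s : ℝ ↦ exp (-s)) (𝓝[>] 0) (𝓝 1) :=
    (hcont.tendsto' 0 1 (by simp)).mono_left nhdsWithin_le_nhds
  simpa using Frullani.integral_Ioi_eq (hcont.locallyIntegrable.locallyIntegrableOn _) ha hb
    hzero tendsto_exp_neg_atTop_nhds_zero
    (by simpa using integrableOn_inv_mul_exp_neg_sub_exp_neg_Ioi ha hb)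

theorem integral_one_div_add {a b M : ℝ} (ha : 0 < M + a) (hb : 0 < M + b) :
    ∫ c in a..b, 1 / (M + c) = log ((M + b) / (M + a)) := by
  rw [intervalIntegral.integral_comp_add_left (fun c ↦ 1 / c) M, integral_one_div_of_pos ha hb]

/-! ### Expansion of Stieltjes transforms -/

theorem one_div_add_eq_sum_add {K : Type*} [Field K] {M c : K} (hM : M ≠ 0) (hMc : M + c ≠ 0)
    (r : ℕ) :
    1 / (M + c) = ∑ q ∈ Finset.range r, (-1) ^ q / M ^ (q + 1) * c ^ q +
      (-1) ^ r / M ^ (r + 1) * (M / (M + c) * c ^ r) := by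
  induction r with
  | zero =>
    rw [Finset.sum_range_zero]
    field_simp
    ring
  | succ r ih =>
    rw [ih, Finset.sum_range_succ]
    field_simp
    ring

theorem exists_integral_one_div_add_eq_sum_add {μ : Measure ℝ} (hμ : ∀ᵐ c ∂μ, 0 < c) {r : ℕ}
    (hint : ∀ q ≤ r, Integrable (fun c ↦ c ^ q) μ) {M : ℝ} (hM : 0 < M) :
    ∃ θ ∈ Ioo (0 : ℝ) 1, ∫ c, 1 / (M + c) ∂μ =
      ∑ q ∈ Finset.range r, (-1) ^ q / M ^ (q + 1) * ∫ c, c ^ q ∂μ +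
        θ * ((-1) ^ r / M ^ (r + 1) * ∫ c, c ^ r ∂μ) := by
  have hrestrict : μ.restrict (Ioi 0) = μ := Measure.restrict_eq_self_of_ae_mem hμ
  have hrem : Integrable (fun c ↦ M / (M + c) * c ^ r) μ := by
    refine (hint r le_rfl).bdd_mul (c := 1) (Measurable.aestronglyMeasurable (by fun_prop)) ?_
    filter_upwards [hμ] with c hc
    rw [norm_of_nonneg (by positivity), div_le_one (by positivity)]
    linarith
  obtain ⟨c, hc : 0 < c, hmean⟩ := exists_eq_const_mul_setIntegral_of_nonneg
    (f := fun c ↦ M / (M + c)) (g := fun c ↦ c ^ r) (μ := μ) (s := Ioi 0)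
    isConnected_Ioi measurableSet_Ioi
    (ContinuousOn.div (by fun_prop) (by fun_prop) fun c (hc : 0 < c) ↦ by positivity)
    (hint r le_rfl).integrableOn hrem.integrableOn (fun c (hc : 0 < c) ↦ by positivity)
  rw [hrestrict] at hmean
  refine ⟨M / (M + c), ⟨by positivity, (div_lt_one (by positivity)).2 (by linarith)⟩, ?_⟩
  calc ∫ c, 1 / (M + c) ∂μ
    _ = ∫ c, (∑ q ∈ Finset.range r, (-1) ^ q / M ^ (q + 1) * c ^ q +
          (-1) ^ r / M ^ (r + 1) * (M / (M + c) * c ^ r)) ∂μ := by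
      refine integral_congr_ae ?_
      filter_upwards [hμ] with c hc using one_div_add_eq_sum_add hM.ne' (by positivity) r
    _ = ∑ q ∈ Finset.range r, (-1) ^ q / M ^ (q + 1) * ∫ c, c ^ q ∂μ +
          (-1) ^ r / M ^ (r + 1) * ∫ c, M / (M + c) * c ^ r ∂μ := by
      have hterm (q : ℕ) (hq : q ∈ Finset.range r) :
          Integrable (fun c ↦ (-1) ^ q / M ^ (q + 1) * c ^ q) μ :=
        (hint q (Finset.mem_range.1 hq).le).const_mul _
      rw [integral_add (integrable_finsetSum _ hterm) (hrem.const_mul _),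
        integral_finsetSum _ hterm]
      simp only [integral_const_mul]
    _ = _ := by
      rw [hmean]
      ring

/-! ### Series and sums -/

theorem hasSum_neg_one_pow_mul {R : Type*} [Ring R] [TopologicalSpace R] [IsTopologicalRing R]
    {f : ℕ → R} {a b : R} (hf : HasSum f a) (hodd : HasSum (fun n ↦ f (2 * n + 1)) b) :
    HasSum (fun n ↦ (-1) ^ n * f n) (a - 2 * b) := by
  have hodd' : HasSum (fun n ↦ if Even n then 0 else f n) b := by
    simpa using HasSum.even_add_odd (f := fun n ↦ if Even n then 0 else f n) (m := 0)
      (by simp) (by simpa using hodd)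
  convert! hf.sub (hodd'.mul_left 2) using 2 with n
  rcases n.even_or_odd with hn | hn
  · simp [hn, hn.neg_one_pow]
  · simp only [hn.neg_one_pow, Nat.not_even_iff_odd.2 hn, if_false]
    noncomm_ring

theorem hasSum_two_mul_div_sq_add_sq {y : ℝ} (hy : y ≠ 0) :
    HasSum (fun n : ℕ ↦ 2 * y / (y ^ 2 + (n + 1) ^ 2))
      (π * (cosh (π * y) / sinh (π * y)) - 1 / y) := by
  have hmem : (Complex.I * y : ℂ) ∈ Complex.integerComplement := by
    rintro ⟨n, hn⟩
    exact hy (by simpa using (congrArg Complex.im hn).symm)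
  have hcot := (summable_cotTerm hmem).hasSum
  rw [← cot_series_rep' hmem] at hcot
  rw [← Complex.hasSum_ofReal]
  have hy0 : (y : ℂ) ≠ 0 := by exact_mod_cast hy
  convert! hcot.mul_left Complex.I using 1
  · ext n
    have hden : (y : ℂ) ^ 2 + (n + 1) ^ 2 ≠ 0 := by
      exact_mod_cast (by positivity : y ^ 2 + ((n : ℝ) + 1) ^ 2 ≠ 0)
    have hfac : (Complex.I * y + (n + 1)) * (Complex.I * y - (n + 1)) =
        -((y : ℂ) ^ 2 + (n + 1) ^ 2) := by
      linear_combination (y : ℂ) ^ 2 * Complex.I_sq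
    rw [cotTerm_identity hmem, hfac]
    push_cast
    field_simp
    linear_combination Complex.I_sq
  · have hsinh : Complex.sinh (π * y) ≠ 0 := by
      exact_mod_cast sinh_ne_zero.2 (by positivity : π * y ≠ 0)
    rw [Complex.cot, show (π : ℂ) * (Complex.I * y) = (π * y) * Complex.I by ring,
      Complex.cos_mul_I, Complex.sin_mul_I]
    push_cast
    field_simp [Complex.I_ne_zero]

theorem hasSum_two_mul_div_sq_add_mul_sq {s a : ℝ} (hs : s ≠ 0) (ha : a ≠ 0) :
    HasSum (fun n : ℕ ↦ 2 * s / (s ^ 2 + (a * (n + 1)) ^ 2))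
      (π / a * (cosh (π * s / a) / sinh (π * s / a)) - 1 / s) := by
  convert! (hasSum_two_mul_div_sq_add_sq (div_ne_zero hs ha)).mul_left (1 / a) using 1
  · ext n
    field_simp
  · rw [mul_div_assoc]
    field_simp

theorem cosh_div_sinh_two_mul_sub_cosh_div_sinh {x : ℝ} (hx : x ≠ 0) :
    cosh (2 * x) / sinh (2 * x) - cosh x / sinh x = -1 / sinh (2 * x) := by
  have hsinh : sinh x ≠ 0 := sinh_ne_zero.2 hx
  have hcosh : cosh x ≠ 0 := (cosh_pos x).ne'
  rw [cosh_two_mul, sinh_two_mul]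
  field_simp
  linear_combination -(cosh_sq x)

theorem sum_choose_mul_one_fourth_pow_mul (b : ℕ → ℝ) (q : ℕ) :
    ∑ j ∈ Finset.range (q + 1),
        q.choose j * (1 / 4) ^ (q - j) * ((-1) ^ (j + 1) * b (j + 1) / (2 * (j + 1))) =
      1 / (2 * (q + 1) * 4 ^ (q + 1)) *
        ∑ k ∈ Finset.Icc 1 (q + 1), (q + 1).choose k * (-4) ^ k * b k := by
  rw [← Finset.Ico_add_one_right_eq_Icc, Finset.sum_Ico_eq_sum_range, Finset.mul_sum,
    add_tsub_cancel_right]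
  refine Finset.sum_congr rfl fun j hj ↦ ?_
  have hchoose : ((q : ℝ) + 1) * q.choose j = (q + 1).choose (j + 1) * (j + 1) := by
    exact_mod_cast Nat.add_one_mul_choose_eq q j
  have hpow : (4 : ℝ) ^ (q + 1) = 4 ^ (q - j) * 4 ^ (j + 1) := by
    rw [← pow_add]
    congr 1
    grind
  rw [add_comm 1 j, hpow, neg_pow (4 : ℝ), one_div_pow]
  field_simp
  linear_combination b (j + 1) * hchoose

/-! ### The remainder at half-integers -/

/-- The kernel of Gauss's integral for the digamma function at half-integers,
`ψ (x + 1 / 2) = log x + ∫ s in Ioi 0, exp (-(x * s)) * binetKernel s`. -/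
noncomputable def binetKernel (s : ℝ) : ℝ := 1 / s - 1 / (2 * sinh (s / 2))

theorem hasSum_binetKernel {s : ℝ} (hs : s ≠ 0) :
    HasSum (fun n : ℕ ↦ (-1) ^ n * (2 * s / (s ^ 2 + (2 * π * (n + 1)) ^ 2))) (binetKernel s) := by
  have hodd : HasSum (fun n : ℕ ↦ 2 * s / (s ^ 2 + (2 * π * ((2 * n + 1 : ℕ) + 1)) ^ 2))
      (π / (4 * π) * (cosh (π * s / (4 * π)) / sinh (π * s / (4 * π))) - 1 / s) := by
    convert! hasSum_two_mul_div_sq_add_mul_sq hs (a := 4 * π) (by positivity) using 4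
    push_cast
    ring
  convert! hasSum_neg_one_pow_mul
    (hasSum_two_mul_div_sq_add_mul_sq hs (a := 2 * π) (by positivity)) hodd using 1
  have hcoth := cosh_div_sinh_two_mul_sub_cosh_div_sinh (x := s / 4) (by positivity)
  rw [show π * s / (2 * π) = 2 * (s / 4) by field_simp; norm_num,
    show π * s / (4 * π) = s / 4 by field_simp, show π / (2 * π) = 1 / 2 by field_simp,
    show π / (4 * π) = 1 / 4 by field_simp]
  rw [binetKernel, show s / 2 = 2 * (s / 4) by ring, ← div_div]
  linear_combination -hcoth / 2

/-- The Fermi–Dirac weight `1 / (exp (2 * π * t) + 1)`, the density behind the Binet-type integral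
for the harmonic numbers. -/
noncomputable def fermiWeight (t : ℝ) : ℝ := 1 / (exp (2 * π * t) + 1)

theorem fermiWeight_pos (t : ℝ) : 0 < fermiWeight t := by
  unfold fermiWeight
  positivity

theorem fermiWeight_le_exp_neg (t : ℝ) : fermiWeight t ≤ exp (-(2 * π * t)) := by
  rw [fermiWeight, exp_neg, ← one_div]
  gcongr
  linarith

@[fun_prop]
theorem continuous_fermiWeight : Continuous fermiWeight :=
  continuous_const.div (by fun_prop) fun t ↦ by positivity

theorem integrableOn_pow_mul_fermiWeight_Ioi (k : ℕ) :
    IntegrableOn (fun t ↦ t ^ k * fermiWeight t) (Ioi 0) := by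
  refine (integrableOn_pow_mul_exp_neg_mul_Ioi k (a := 2 * π) (by positivity)).mono'
    (Continuous.aestronglyMeasurable (by fun_prop)) ?_
  filter_upwards [ae_restrict_mem measurableSet_Ioi] with t (ht : 0 < t)
  have hpos := fermiWeight_pos t
  rw [norm_of_nonneg (by positivity)]
  gcongr
  exact fermiWeight_le_exp_neg t

theorem hasSum_fermiWeight {t : ℝ} (ht : 0 < t) :
    HasSum (fun j : ℕ ↦ (-1) ^ j * exp (-(2 * π * (j + 1) * t))) (fermiWeight t) := by
  have hlt : exp (-(2 * π * t)) < 1 := exp_lt_one_iff.2 (neg_neg_of_pos (by positivity))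
  have hgeom := (hasSum_geometric_of_abs_lt_one (r := -exp (-(2 * π * t)))
    (by rwa [abs_neg, abs_exp])).mul_right (exp (-(2 * π * t)))
  convert! hgeom using 1
  · ext j
    rw [neg_pow (exp _), ← exp_nat_mul, mul_assoc ((-1 : ℝ) ^ j), ← exp_add]
    ring_nf
  · rw [fermiWeight, exp_neg, sub_neg_eq_add]
    field_simp

theorem summable_one_div_two_pi_mul_pow {k : ℕ} (hk : 1 < k) :
    Summable fun j : ℕ ↦ 1 / (2 * π * (j + 1)) ^ k := by
  have h := (summable_nat_add_iff 1).2 (summable_one_div_nat_pow.2 hk)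
  refine (h.mul_left (1 / (2 * π) ^ k)).congr fun j ↦ ?_
  push_cast
  rw [mul_pow (2 * π), div_mul_div_comm, one_mul]

theorem hasSum_integral_mul_fermiWeight {f : ℝ → ℝ} {k : ℕ} {C : ℝ}
    (hf : AEStronglyMeasurable f (volume.restrict (Ioi 0))) (hk : 0 < k)
    (hbound : ∀ t, 0 < t → |f t| ≤ C * t ^ k) :
    HasSum (fun j : ℕ ↦ (-1) ^ j * ∫ t in Ioi (0 : ℝ), f t * exp (-(2 * π * (j + 1) * t)))
      (∫ t in Ioi (0 : ℝ), f t * fermiWeight t) := by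
  set F : ℕ → ℝ → ℝ := fun j t ↦ (-1) ^ j * (f t * exp (-(2 * π * (j + 1) * t))) with hF
  set G : ℕ → ℝ → ℝ := fun j t ↦ C * (t ^ k * exp (-(2 * π * (j + 1) * t))) with hG
  have hFG (j : ℕ) : ∀ᵐ t ∂volume.restrict (Ioi 0), ‖F j t‖ ≤ G j t := by
    filter_upwards [ae_restrict_mem measurableSet_Ioi] with t ht
    simp only [hF, hG, norm_mul, norm_pow, norm_neg, norm_one, one_pow, one_mul, norm_eq_abs,
      abs_exp, ← mul_assoc]
    gcongr
    exact hbound t ht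
  have hGint (j : ℕ) : IntegrableOn (G j) (Ioi 0) :=
    (integrableOn_pow_mul_exp_neg_mul_Ioi k (by positivity)).const_mul C
  have hFint (j : ℕ) : IntegrableOn (F j) (Ioi 0) :=
    (hGint j).mono' ((hf.mul (Continuous.aestronglyMeasurable (by fun_prop))).const_mul _) (hFG j)
  have hsum : Summable fun j ↦ ∫ t in Ioi (0 : ℝ), ‖F j t‖ := by
    refine .of_nonneg_of_le (fun j ↦ integral_nonneg fun t ↦ norm_nonneg _)
      (fun j ↦ integral_mono_ae (hFint j).norm (hGint j) (hFG j)) ?_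
    refine ((summable_one_div_two_pi_mul_pow (Nat.lt_add_of_pos_left hk)).mul_left
      (C * k.factorial)).congr fun j ↦ ?_
    rw [integral_const_mul, integral_pow_mul_exp_neg_mul_Ioi k (by positivity), mul_assoc,
      mul_one_div]
  have h := hasSum_integral_of_summable_integral_norm hFint hsum
  simp only [hF, integral_const_mul] at h
  convert! h using 1
  refine setIntegral_congr_fun measurableSet_Ioi fun t ht ↦ ?_
  rw [← ((hasSum_fermiWeight ht).mul_left (f t)).tsum_eq]
  simp only [mul_left_comm]

theorem bernoulliFun_one_half_eq_cast (k : ℕ) :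
    bernoulliFun k (1 / 2) = ((Polynomial.bernoulli k).eval ((1 : ℚ) / 2) : ℚ) := by
  simpa [bernoulliFun] using
    Polynomial.eval_map_apply (p := Polynomial.bernoulli k) (f := algebraMap ℚ ℝ) (x := (1 : ℚ) / 2)

theorem hasSum_neg_one_pow_div_pow_two_mul {k : ℕ} (hk : k ≠ 0) :
    HasSum (fun j : ℕ ↦ (-1) ^ j / (j + 1 : ℝ) ^ (2 * k))
      ((-1) ^ k * (2 * π) ^ (2 * k) / 2 / (2 * k).factorial * bernoulliFun (2 * k) (1 / 2)) := by
  have h := (hasSum_nat_add_iff' 1).2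
    (hasSum_one_div_nat_pow_mul_cos hk (x := 1 / 2) (by constructor <;> norm_num))
  convert! h.neg using 1
  · ext j
    rw [show 2 * π * ((j + 1 : ℕ) : ℝ) * (1 / 2) = ((j + 1 : ℕ) : ℝ) * π by ring, cos_nat_mul_pi]
    push_cast
    ring
  · simp only [Finset.sum_range_one, Nat.cast_zero, mul_zero, zero_mul, cos_zero, mul_one,
      zero_pow (mul_ne_zero two_ne_zero hk), div_zero, sub_zero, bernoulliFun, pow_succ]
    ring

theorem integral_pow_mul_fermiWeight_Ioi (k : ℕ) :
    ∫ t in Ioi (0 : ℝ), t ^ (2 * k + 1) * fermiWeight t =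
      (-1) ^ (k + 1) * bernoulliFun (2 * (k + 1)) (1 / 2) / (4 * (k + 1)) := by
  have hseries := hasSum_integral_mul_fermiWeight (f := fun t ↦ t ^ (2 * k + 1)) (C := 1)
    (Continuous.aestronglyMeasurable (by fun_prop)) (Nat.succ_pos _)
    (fun t ht ↦ by rw [one_mul, abs_of_pos (by positivity)])
  refine hseries.unique ?_
  convert! (hasSum_neg_one_pow_div_pow_two_mul (k.add_one_ne_zero)).mul_left
    ((2 * k + 1).factorial / (2 * π) ^ (2 * (k + 1))) using 1
  · ext j
    rw [integral_pow_mul_exp_neg_mul_Ioi _ (by positivity), mul_pow, mul_add_one 2 k]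
    field_simp
  · have hfac : ((2 * (k + 1)).factorial : ℝ) = 2 * (k + 1) * (2 * k + 1).factorial := by
      rw [mul_add_one 2 k, Nat.factorial_succ]
      push_cast
      ring
    rw [hfac]
    field_simp
    ring

theorem integral_sin_mul_fermiWeight_Ioi {s : ℝ} (hs : s ≠ 0) :
    ∫ t in Ioi (0 : ℝ), sin (s * t) * fermiWeight t = binetKernel s / 2 := by
  have hseries := hasSum_integral_mul_fermiWeight (f := fun t ↦ sin (s * t)) (C := |s|)
    (Continuous.aestronglyMeasurable (by fun_prop)) one_pos
    (fun t ht ↦ by simpa [abs_mul, abs_of_pos ht] using abs_sin_le_abs (x := s * t))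
  refine hseries.unique ?_
  convert! (hasSum_binetKernel hs).div_const 2 using 2 with j
  rw [integral_sin_mul_exp_neg_mul_Ioi s (by positivity)]
  ring

/-- The measure with density `2 * t * fermiWeight t` on the positive half-line, which represents the
remainder `binetIntegral` as an integral of `1 / (x ^ 2 + t ^ 2)`. -/
noncomputable def binetMeasure : Measure ℝ :=
  (volume.restrict (Ioi 0)).withDensity fun t ↦ ENNReal.ofReal (2 * t * fermiWeight t)

theorem integral_binetMeasure (f : ℝ → ℝ) :
    ∫ t, f t ∂binetMeasure = ∫ t in Ioi (0 : ℝ), 2 * t * fermiWeight t * f t := by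
  rw [binetMeasure, integral_withDensity_eq_integral_toReal_smul (by fun_prop) (by simp)]
  refine setIntegral_congr_fun measurableSet_Ioi fun t (ht : 0 < t) ↦ ?_
  have hw := fermiWeight_pos t
  simp only [ENNReal.toReal_ofReal (by positivity : 0 ≤ 2 * t * fermiWeight t), smul_eq_mul]

theorem integrable_binetMeasure_iff {f : ℝ → ℝ} :
    Integrable f binetMeasure ↔
      IntegrableOn (fun t ↦ 2 * t * fermiWeight t * f t) (Ioi 0) := by
  rw [binetMeasure, integrable_withDensity_iff_integrable_smul' (by fun_prop) (by simp)]
  refine integrable_congr ?_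
  filter_upwards [ae_restrict_mem measurableSet_Ioi] with t (ht : 0 < t)
  have hw := fermiWeight_pos t
  rw [ENNReal.toReal_ofReal (by positivity), smul_eq_mul]

theorem integrable_pow_binetMeasure (k : ℕ) : Integrable (fun t ↦ t ^ k) binetMeasure := by
  refine integrable_binetMeasure_iff.2
    (((integrableOn_pow_mul_fermiWeight_Ioi (k + 1)).const_mul 2).congr (ae_of_all _ fun t ↦ ?_))
  ring

instance : IsFiniteMeasure binetMeasure :=
  (integrable_const_iff_isFiniteMeasure one_ne_zero).1
    (by simpa using integrable_pow_binetMeasure 0)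

theorem integral_pow_two_mul_binetMeasure (k : ℕ) :
    ∫ t, t ^ (2 * k) ∂binetMeasure =
      (-1) ^ (k + 1) * bernoulliFun (2 * (k + 1)) (1 / 2) / (2 * (k + 1)) := by
  have hdensity (t : ℝ) :
      2 * t * fermiWeight t * t ^ (2 * k) = 2 * (t ^ (2 * k + 1) * fermiWeight t) := by ring
  rw [integral_binetMeasure]
  simp only [hdensity]
  rw [integral_const_mul, integral_pow_mul_fermiWeight_Ioi]
  field_simp
  ring

/-- The remainder in the expansion of the harmonic numbers about half-integers:
`harmonic n = γ + log x + binetIntegral x` for `x = n + 1 / 2`. -/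
noncomputable def binetIntegral (x : ℝ) : ℝ := ∫ t, 1 / (x ^ 2 + t ^ 2) ∂binetMeasure

theorem integrable_sin_mul_exp_neg_mul_fermiWeight {x : ℝ} (hx : 0 < x) :
    Integrable (fun z : ℝ × ℝ ↦ sin (z.1 * z.2) * (exp (-(x * z.1)) * (2 * fermiWeight z.2)))
      ((volume.restrict (Ioi 0)).prod (volume.restrict (Ioi 0))) := by
  have hw : IntegrableOn fermiWeight (Ioi 0) := by
    simpa using integrableOn_pow_mul_fermiWeight_Ioi 0
  exact ((integrableOn_exp_neg_mul_Ioi hx).mul_prod (hw.const_mul 2)).bdd_mul (c := 1)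
    (Continuous.aestronglyMeasurable (by fun_prop)) (ae_of_all _ fun _ ↦ abs_sin_le_one _)

theorem integral_sin_mul_exp_neg_mul_fermiWeight {s : ℝ} (hs : s ≠ 0) (x : ℝ) :
    ∫ t in Ioi (0 : ℝ), sin (s * t) * (exp (-(x * s)) * (2 * fermiWeight t)) =
      exp (-(x * s)) * binetKernel s := by
  calc ∫ t in Ioi (0 : ℝ), sin (s * t) * (exp (-(x * s)) * (2 * fermiWeight t))
    _ = ∫ t in Ioi (0 : ℝ), 2 * exp (-(x * s)) * (sin (s * t) * fermiWeight t) := by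
      congr with t
      ring
    _ = exp (-(x * s)) * binetKernel s := by
      rw [integral_const_mul, integral_sin_mul_fermiWeight_Ioi hs]
      ring

theorem integrableOn_exp_neg_mul_binetKernel_Ioi {x : ℝ} (hx : 0 < x) :
    IntegrableOn (fun s ↦ exp (-(x * s)) * binetKernel s) (Ioi 0) := by
  refine (integrable_sin_mul_exp_neg_mul_fermiWeight hx).integral_prod_left.congr ?_
  filter_upwards [ae_restrict_mem measurableSet_Ioi] with s (hs : 0 < s)
  exact integral_sin_mul_exp_neg_mul_fermiWeight hs.ne' x

theorem binetIntegral_eq_laplace {x : ℝ} (hx : 0 < x) :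
    binetIntegral x = ∫ s in Ioi (0 : ℝ), exp (-(x * s)) * binetKernel s := by
  have hinner (t : ℝ) : ∫ s in Ioi (0 : ℝ), sin (s * t) * (exp (-(x * s)) * (2 * fermiWeight t)) =
      2 * t * fermiWeight t * (1 / (x ^ 2 + t ^ 2)) := by
    have hcomm (s : ℝ) : sin (s * t) * (exp (-(x * s)) * (2 * fermiWeight t)) =
        2 * fermiWeight t * (sin (t * s) * exp (-(x * s))) := by
      rw [mul_comm s t]
      ring
    simp only [hcomm]
    rw [integral_const_mul, integral_sin_mul_exp_neg_mul_Ioi t hx]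
    ring
  calc binetIntegral x
    _ = ∫ t in Ioi (0 : ℝ), ∫ s in Ioi (0 : ℝ),
          sin (s * t) * (exp (-(x * s)) * (2 * fermiWeight t)) := by
      simp only [binetIntegral, integral_binetMeasure, hinner]
    _ = ∫ s in Ioi (0 : ℝ), ∫ t in Ioi (0 : ℝ),
          sin (s * t) * (exp (-(x * s)) * (2 * fermiWeight t)) :=
      (integral_integral_swap (integrable_sin_mul_exp_neg_mul_fermiWeight hx)).symm
    _ = ∫ s in Ioi (0 : ℝ), exp (-(x * s)) * binetKernel s :=
      setIntegral_congr_fun measurableSet_Ioi fun s (hs : 0 < s) ↦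
        integral_sin_mul_exp_neg_mul_fermiWeight hs.ne' x

theorem exp_neg_mul_sub_exp_neg_mul_mul_binetKernel {s : ℝ} (hs : s ≠ 0) (x : ℝ) :
    exp (-(x * s)) * binetKernel s - exp (-((x + 1) * s)) * binetKernel s =
      s⁻¹ * (exp (-(x * s)) - exp (-((x + 1) * s))) - exp (-((x + 1 / 2) * s)) := by
  have hsinh : sinh (s / 2) ≠ 0 := sinh_ne_zero.2 (by positivity)
  have hsub : exp (-(x * s)) - exp (-((x + 1) * s)) =
      2 * sinh (s / 2) * exp (-((x + 1 / 2) * s)) := by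
    rw [sinh_eq, mul_div_cancel₀ _ two_ne_zero, sub_mul, ← exp_add, ← exp_add]
    ring_nf
  rw [← sub_mul, hsub, binetKernel]
  field_simp

theorem binetIntegral_sub_binetIntegral_add_one {x : ℝ} (hx : 0 < x) :
    binetIntegral x - binetIntegral (x + 1) = log ((x + 1) / x) - 1 / (x + 1 / 2) := by
  have hx1 : 0 < x + 1 := by positivity
  have hx2 : 0 < x + 1 / 2 := by positivity
  rw [binetIntegral_eq_laplace hx, binetIntegral_eq_laplace hx1,
    ← integral_sub (integrableOn_exp_neg_mul_binetKernel_Ioi hx)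
      (integrableOn_exp_neg_mul_binetKernel_Ioi hx1),
    ← integral_inv_mul_exp_neg_sub_exp_neg_Ioi hx hx1, ← integral_exp_neg_mul_Ioi hx2,
    ← integral_sub (integrableOn_inv_mul_exp_neg_sub_exp_neg_Ioi hx hx1)
      (integrableOn_exp_neg_mul_Ioi hx2)]
  exact setIntegral_congr_fun measurableSet_Ioi fun s (hs : 0 < s) ↦
    exp_neg_mul_sub_exp_neg_mul_mul_binetKernel hs.ne' x

theorem tendsto_binetIntegral_atTop : Tendsto binetIntegral atTop (𝓝 0) := by
  have hbound : ∀ᶠ x in atTop, ‖binetIntegral x‖ ≤ 1 / x ^ 2 * binetMeasure.real univ := by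
    filter_upwards [eventually_gt_atTop 0] with x hx
    refine norm_integral_le_of_norm_le_const (ae_of_all _ fun t ↦ ?_)
    rw [norm_of_nonneg (by positivity)]
    gcongr
    linarith [sq_nonneg t]
  refine squeeze_zero_norm' hbound ?_
  simpa using ((tendsto_pow_atTop (α := ℝ) two_ne_zero).inv_tendsto_atTop).mul_const _

theorem harmonic_eq_eulerMascheroniConstant_add_log_add_binetIntegral (n : ℕ) :
    (harmonic n : ℝ) =
      eulerMascheroniConstant + log (n + 1 / 2) + binetIntegral (n + 1 / 2) := by
  set E : ℕ → ℝ := fun n ↦ harmonic n - log (n + 1 / 2) - binetIntegral (n + 1 / 2) with hE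
  have hstep (n : ℕ) : E (n + 1) = E n := by
    have hdiff := binetIntegral_sub_binetIntegral_add_one (x := n + 1 / 2) (by positivity)
    rw [log_div (by positivity) (by positivity), add_right_comm,
      show (n : ℝ) + 1 / 2 + 1 / 2 = n + 1 by ring] at hdiff
    simp only [hE, harmonic_succ]
    push_cast
    linear_combination hdiff
  have hconst (k : ℕ) : E k = E 0 := by
    induction k with
    | zero => rfl
    | succ k ih => rw [hstep, ih]
  have hlim : Tendsto E atTop (𝓝 eulerMascheroniConstant) := by
    have hatTop : Tendsto (fun n : ℕ ↦ (n : ℝ) + 1 / 2) atTop atTop :=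
      tendsto_atTop_add_const_right _ _ tendsto_natCast_atTop_atTop
    have hlog := (tendsto_log_comp_add_sub_log (1 / 2)).comp tendsto_natCast_atTop_atTop
    simpa [hE, Function.comp_def] using
      (tendsto_harmonic_sub_log.sub hlog).sub (tendsto_binetIntegral_atTop.comp hatTop)
  have hEn : E n = eulerMascheroniConstant :=
    (hconst n).trans <|
      tendsto_nhds_unique (tendsto_const_nhds.congr fun k ↦ (hconst k).symm) hlim
  simp only [hE] at hEn
  linear_combination hEn

/-! ### Powers of the triangular numbers -/

/-- The measure on the positive half-line whose Stieltjes transform at `n * (n + 1)` is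
`harmonic n - γ - log (n * (n + 1)) / 2`. The Lebesgue part accounts for the passage from
`log (n + 1 / 2)` to `log (n * (n + 1)) / 2`, and the other part is `binetMeasure` in the variable
`c = t ^ 2 + 1 / 4`, for which `(n + 1 / 2) ^ 2 + t ^ 2 = n * (n + 1) + c`. -/
noncomputable def ramanujanMeasure : Measure ℝ :=
  (1 / 2 : ENNReal) • volume.restrict (Ioc 0 (1 / 4)) +
    binetMeasure.map fun t ↦ t ^ 2 + 1 / 4

theorem ae_pos_ramanujanMeasure : ∀ᵐ c ∂ramanujanMeasure, 0 < c := by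
  rw [ramanujanMeasure, ae_add_measure_iff]
  refine ⟨Measure.ae_smul_measure ?_ _, ?_⟩
  · filter_upwards [ae_restrict_mem measurableSet_Ioc] with c hc using hc.1
  · rw [ae_map_iff (by fun_prop) measurableSet_Ioi]
    exact ae_of_all _ fun t ↦ by positivity

theorem integrable_ramanujanMeasure_iff {f : ℝ → ℝ} (hf : Measurable f) :
    Integrable f ramanujanMeasure ↔
      IntegrableOn f (Ioc 0 (1 / 4)) ∧ Integrable (fun t ↦ f (t ^ 2 + 1 / 4)) binetMeasure := by
  rw [ramanujanMeasure, integrable_add_measure, integrable_smul_measure (by simp) (by simp),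
    integrable_map_measure hf.aestronglyMeasurable (by fun_prop), IntegrableOn, Function.comp_def]

theorem integral_ramanujanMeasure {f : ℝ → ℝ} (hf : Measurable f)
    (hint : Integrable f ramanujanMeasure) :
    ∫ c, f c ∂ramanujanMeasure =
      1 / 2 * (∫ c in (0 : ℝ)..(1 / 4), f c) + ∫ t, f (t ^ 2 + 1 / 4) ∂binetMeasure := by
  have hint' := hint
  rw [ramanujanMeasure, integrable_add_measure] at hint'
  rw [ramanujanMeasure, integral_add_measure hint'.1 hint'.2, integral_smul_measure,
    integral_map (by fun_prop) hf.aestronglyMeasurable,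
    intervalIntegral.integral_of_le (by norm_num)]
  simp

theorem integrable_sq_add_pow_binetMeasure (a : ℝ) (q : ℕ) :
    Integrable (fun t ↦ (t ^ 2 + a) ^ q) binetMeasure := by
  simp only [add_pow, ← pow_mul, mul_assoc]
  exact integrable_finsetSum _ fun j _ ↦ (integrable_pow_binetMeasure _).mul_const _

theorem integral_sq_add_pow_binetMeasure (a : ℝ) (q : ℕ) :
    ∫ t, (t ^ 2 + a) ^ q ∂binetMeasure =
      ∑ j ∈ Finset.range (q + 1), q.choose j * a ^ (q - j) *
        ((-1) ^ (j + 1) * bernoulliFun (2 * (j + 1)) (1 / 2) / (2 * (j + 1))) := by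
  simp only [add_pow, ← pow_mul, mul_assoc]
  rw [integral_finsetSum _ fun j _ ↦ (integrable_pow_binetMeasure _).mul_const _]
  simp only [integral_mul_const, integral_pow_two_mul_binetMeasure]
  refine Finset.sum_congr rfl fun j _ ↦ ?_
  ring

theorem integrable_pow_ramanujanMeasure (q : ℕ) :
    Integrable (fun c ↦ c ^ q) ramanujanMeasure :=
  (integrable_ramanujanMeasure_iff (by fun_prop)).2
    ⟨(by fun_prop : Continuous fun c : ℝ ↦ c ^ q).integrableOn_Ioc,
      integrable_sq_add_pow_binetMeasure _ q⟩

theorem neg_one_pow_div_pow_mul_integral_pow_ramanujanMeasure (M : ℝ) (q : ℕ) :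
    (-1) ^ q / M ^ (q + 1) * ∫ c, c ^ q ∂ramanujanMeasure =
      ramanujanCoeff (q + 1) / (M / 2) ^ (q + 1) := by
  rw [integral_ramanujanMeasure (by fun_prop) (integrable_pow_ramanujanMeasure q), integral_pow,
    integral_sq_add_pow_binetMeasure,
    sum_choose_mul_one_fourth_pow_mul fun k ↦ bernoulliFun (2 * k) (1 / 2), ramanujanCoeff,
    add_tsub_cancel_right, show (8 : ℝ) = 2 * 4 by norm_num, mul_pow, one_div_pow,
    zero_pow q.add_one_ne_zero, sub_zero, div_pow]
  simp only [bernoulliFun_one_half_eq_cast]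
  push_cast
  field_simp

theorem integral_one_div_add_ramanujanMeasure {x : ℝ} (hx : 1 / 2 < x) :
    ∫ c, 1 / (x ^ 2 - 1 / 4 + c) ∂ramanujanMeasure =
      log x - 1 / 2 * log (x ^ 2 - 1 / 4) + binetIntegral x := by
  have hM : 0 < x ^ 2 - 1 / 4 := by nlinarith
  have hshift (t : ℝ) : x ^ 2 - 1 / 4 + (t ^ 2 + 1 / 4) = x ^ 2 + t ^ 2 := by ring
  have hint : Integrable (fun c ↦ 1 / (x ^ 2 - 1 / 4 + c)) ramanujanMeasure := by
    refine ((integrable_pow_ramanujanMeasure 0).const_mul (1 / (x ^ 2 - 1 / 4))).mono'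
      (Measurable.aestronglyMeasurable (by fun_prop)) ?_
    filter_upwards [ae_pos_ramanujanMeasure] with c hc
    rw [norm_of_nonneg (by positivity), pow_zero, mul_one]
    gcongr
    linarith
  rw [integral_ramanujanMeasure (by fun_prop) hint,
    integral_one_div_add (by linarith) (by linarith), log_div (by linarith) (by linarith),
    sub_add_cancel, add_zero, log_pow, binetIntegral]
  simp only [hshift]
  push_cast
  ring

theorem harmonic_eq_eulerMascheroniConstant_add_log_add_integral_ramanujanMeasure {n : ℕ}
    (hn : 0 < n) :
    (harmonic n : ℝ) = eulerMascheroniConstant + 1 / 2 * log (n * (n + 1)) +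
      ∫ c, 1 / (n * (n + 1) + c) ∂ramanujanMeasure := by
  have hn' : (0 : ℝ) < n := by exact_mod_cast hn
  have h := integral_one_div_add_ramanujanMeasure (x := n + 1 / 2) (by linarith)
  rw [show ((n : ℝ) + 1 / 2) ^ 2 - 1 / 4 = n * (n + 1) by ring] at h
  rw [h, harmonic_eq_eulerMascheroniConstant_add_log_add_binetIntegral]
  ring

theorem ramanujan_expansion (n : ℕ) (hn : 0 < n) (r : ℕ) (hr : 1 ≤ r) :
    ∃ Θ : ℝ, 0 < Θ ∧ Θ < 1 ∧
      (harmonic n : ℝ) =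
        (1 / 2) * Real.log (2 * ((n * (n + 1) : ℝ) / 2)) + Real.eulerMascheroniConstant +
          (∑ p ∈ Finset.Icc 1 r, ramanujanCoeff p / ((n * (n + 1) : ℝ) / 2) ^ p) +
          Θ * ramanujanCoeff (r + 1) / ((n * (n + 1) : ℝ) / 2) ^ (r + 1) := by
  have hM : (0 : ℝ) < n * (n + 1) := by positivity
  obtain ⟨θ, ⟨hpos, hlt⟩, hθ⟩ := exists_integral_one_div_add_eq_sum_add
    ae_pos_ramanujanMeasure (r := r) (fun q _ ↦ integrable_pow_ramanujanMeasure q) hM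
  refine ⟨θ, hpos, hlt, ?_⟩
  simp only [neg_one_pow_div_pow_mul_integral_pow_ramanujanMeasure] at hθ
  rw [harmonic_eq_eulerMascheroniConstant_add_log_add_integral_ramanujanMeasure hn, hθ,
    mul_div_cancel₀ _ two_ne_zero, ← Finset.Ico_add_one_right_eq_Icc, Finset.sum_Ico_eq_sum_range]
  simp only [add_tsub_cancel_right, add_comm 1]
  ring
end

section
/- For every positive integer n, define Λ_n by H_n = (1/2)·ln(2m) + γ + 1/(12m + Λ_n), where m := n(n+1)/2. Then Λ_n = 6/5 − 19/(175·m) + 13/(250·m^2) − δ_n/m^3 for some δ_n with 0 < δ_n < 187969/4042500. -/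
open Real

/-!
Let `D_d(m) = 12 m + 6/5 - 19/(175 m) + 13/(250 m²) - d/m³`. The claim is that the error
`eₙ = Hₙ - ½ log (2 m) - γ = 1/(12 m + Λₙ)` satisfies `1/D_0(m) < eₙ < 1/D_c(m)`, where
`c = 187969/4042500` comes from the next coefficient of the asymptotic expansion. All three
sequences tend to `0`, so it suffices to compare their consecutive differences. With
`y = 1/(n + 1)`, `eₙ - eₙ₊₁ = artanh y - y`, and truncating the power series of `artanh` on either
side leaves two inequalities between rational functions of `n`.
-/

open Filter Finset Topology

theorem lt_of_tendsto_of_sub_succ_lt_sub_succ {α : Type*} [AddCommGroup α] [PartialOrder α]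
    [IsOrderedAddMonoid α] [TopologicalSpace α] [OrderClosedTopology α] [ContinuousSub α]
    {f g : ℕ → α} {l : α} {N n : ℕ} (hf : Tendsto f atTop (𝓝 l)) (hg : Tendsto g atTop (𝓝 l))
    (hstep : ∀ k ≥ N, f k - f (k + 1) < g k - g (k + 1)) (hn : N ≤ n) : f n < g n := by
  have hanti : StrictAnti fun k ↦ g (k + n) - f (k + n) := by
    refine strictAnti_nat_of_succ_lt fun k ↦ ?_
    have hk := hstep (k + n) (by omega)
    rw [add_right_comm k 1 n]
    rw [← sub_pos] at hk ⊢
    convert hk using 1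
    abel
  have hlim : Tendsto (fun k ↦ g (k + n) - f (k + n)) atTop (𝓝 0) := by
    simpa only [sub_self] using ((tendsto_add_atTop_iff_nat n).2 hg).sub
      ((tendsto_add_atTop_iff_nat n).2 hf)
  have hpos : 0 < g (0 + n) - f (0 + n) :=
    (hanti.antitone.le_of_tendsto hlim 1).trans_lt (hanti zero_lt_one)
  simpa only [zero_add, sub_pos] using hpos

/-- The triangular number `x (x + 1) / 2`, extended to real `x` so that inequalities in `n` can be
proved as inequalities between rational functions. -/
noncomputable def triangular (x : ℝ) : ℝ := x * (x + 1) / 2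

theorem one_le_triangular {x : ℝ} (hx : 1 ≤ x) : 1 ≤ triangular x := by
  unfold triangular
  nlinarith

theorem tendsto_triangular_atTop : Tendsto triangular atTop atTop := by
  refine tendsto_atTop_mono' _ ?_ tendsto_id
  filter_upwards [eventually_ge_atTop 1] with x hx
  unfold triangular
  simp only [id_eq]
  nlinarith

/-- The error `Hₙ - (½ log (2 m) + γ)`, with `m = n (n + 1) / 2`, of the approximation of the
harmonic numbers whose reciprocal is `12 m + Λₙ`. -/
noncomputable def harmonicError (n : ℕ) : ℝ :=
  harmonic n - (1 / 2 * log (2 * triangular n) + eulerMascheroniConstant)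

theorem harmonicError_eq {n : ℕ} (hn : n ≠ 0) :
    harmonicError n = harmonic n - (log n + log (n + 1)) / 2 - eulerMascheroniConstant := by
  have hm : 2 * triangular n = n * (n + 1) := by
    unfold triangular
    ring
  rw [harmonicError, hm, log_mul (by positivity) (by positivity)]
  ring

theorem tendsto_harmonicError : Tendsto harmonicError atTop (𝓝 0) := by
  have hmean := (tendsto_harmonic_sub_log.add tendsto_harmonic_sub_log_add_one).div_const 2
  rw [add_self_div_two] at hmean
  rw [← sub_self eulerMascheroniConstant]
  refine (hmean.sub_const eulerMascheroniConstant).congr' ?_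
  filter_upwards [eventually_ne_atTop 0] with n hn
  rw [harmonicError_eq hn]
  ring

theorem harmonicError_sub_succ {n : ℕ} (hn : n ≠ 0) :
    harmonicError n - harmonicError (n + 1) =
      1 / 2 * log ((1 + 1 / ((n : ℝ) + 1)) / (1 - 1 / (n + 1))) - 1 / (n + 1) := by
  have hquot : (1 + 1 / ((n : ℝ) + 1)) / (1 - 1 / (n + 1)) = (n + 1 + 1) / n := by
    rw [one_add_div (by positivity), one_sub_div (by positivity), add_sub_cancel_right,
      div_div_div_cancel_right₀ (by positivity)]
  rw [hquot, log_div (by positivity) (by positivity), harmonicError_eq hn,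
    harmonicError_eq n.succ_ne_zero, harmonic_succ]
  push_cast
  ring

/-- The truncated expansion of `12 m + Λₙ` in powers of `m⁻¹`, with the remainder written as
`-d / m³`. -/
noncomputable def lodgeDenom (d m : ℝ) : ℝ :=
  12 * m + 6 / 5 - 19 / (175 * m) + 13 / (250 * m ^ 2) - d / m ^ 3

theorem lodgeDenom_pos {d m : ℝ} (hd : d ≤ 12) (hm : 1 ≤ m) : 0 < lodgeDenom d m := by
  have hfirst : 19 / (175 * m) ≤ 19 / 175 := by
    gcongr
    linarith
  have hsecond : 0 < 13 / (250 * m ^ 2) := by positivity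
  have hremainder : d / m ^ 3 ≤ 12 := by
    rw [div_le_iff₀ (by positivity)]
    nlinarith [one_le_pow₀ hm (n := 3)]
  unfold lodgeDenom
  linarith

theorem tendsto_lodgeDenom_atTop (d : ℝ) : Tendsto (lodgeDenom d) atTop atTop := by
  have hmain : Tendsto (fun m : ℝ ↦ 12 * m + 6 / 5) atTop atTop :=
    tendsto_atTop_add_const_right _ _ (tendsto_id.const_mul_atTop (by norm_num))
  have hfirst : Tendsto (fun m : ℝ ↦ 19 / (175 * m)) atTop (𝓝 0) :=
    tendsto_const_nhds.div_atTop (tendsto_id.const_mul_atTop (by norm_num))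
  have hsecond : Tendsto (fun m : ℝ ↦ 13 / (250 * m ^ 2)) atTop (𝓝 0) :=
    tendsto_const_nhds.div_atTop
      ((tendsto_pow_atTop two_ne_zero).const_mul_atTop (by norm_num))
  have hremainder : Tendsto (fun m : ℝ ↦ d / m ^ 3) atTop (𝓝 0) :=
    tendsto_const_nhds.div_atTop (tendsto_pow_atTop three_ne_zero)
  unfold lodgeDenom
  simpa only [sub_eq_add_neg] using
    ((hmain.atTop_add hfirst.neg).atTop_add hsecond).atTop_add hremainder.neg

theorem tendsto_one_div_lodgeDenom_triangular (d : ℝ) :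
    Tendsto (fun n : ℕ ↦ 1 / lodgeDenom d (triangular n)) atTop (𝓝 0) :=
  tendsto_const_nhds.div_atTop <| (tendsto_lodgeDenom_atTop d).comp <|
    tendsto_triangular_atTop.comp tendsto_natCast_atTop_atTop

theorem exists_lodgeDenom_eq {a b m L : ℝ} (hm : 0 < m) (hb : lodgeDenom b m < L)
    (ha : L < lodgeDenom a m) : ∃ d, a < d ∧ d < b ∧ lodgeDenom d m = L := by
  have hshift (c : ℝ) : lodgeDenom c m = lodgeDenom 0 m - c / m ^ 3 := by
    unfold lodgeDenom
    ring
  rw [hshift] at ha hb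
  refine ⟨(lodgeDenom 0 m - L) * m ^ 3, ?_, ?_, ?_⟩
  · rw [← div_lt_iff₀ (by positivity)]
    linarith
  · rw [← lt_div_iff₀ (by positivity)]
    linarith
  · rw [hshift]
    field_simp
    ring

/-- The numerator of `lodgeDenom d m` over the denominator `m ^ 3`, used to clear denominators. -/
noncomputable def lodgePoly (d m : ℝ) : ℝ :=
  12 * m ^ 4 + 6 / 5 * m ^ 3 - 19 / 175 * m ^ 2 + 13 / 250 * m - d

theorem lodgePoly_eq_mul (d : ℝ) {m : ℝ} (hm : m ≠ 0) :
    lodgePoly d m = lodgeDenom d m * m ^ 3 := by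
  unfold lodgePoly lodgeDenom
  field_simp

theorem lodgePoly_pos {d m : ℝ} (hd : d ≤ 12) (hm : 1 ≤ m) : 0 < lodgePoly d m := by
  rw [lodgePoly_eq_mul d (by positivity)]
  exact mul_pos (lodgeDenom_pos hd hm) (by positivity)

theorem one_div_lodgeDenom_sub {d a b : ℝ} (hd : d ≤ 12) (ha : 1 ≤ a) (hb : 1 ≤ b) :
    1 / lodgeDenom d a - 1 / lodgeDenom d b =
      (a ^ 3 * lodgePoly d b - lodgePoly d a * b ^ 3) / (lodgePoly d a * lodgePoly d b) := by
  have hinv {m : ℝ} (hm : 1 ≤ m) : 1 / lodgeDenom d m = m ^ 3 / lodgePoly d m := by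
    rw [lodgePoly_eq_mul d (by positivity), div_mul_cancel_right₀ (by positivity), one_div]
  rw [hinv ha, hinv hb, div_sub_div _ _ (lodgePoly_pos hd ha).ne' (lodgePoly_pos hd hb).ne']

theorem one_div_lodgeDenom_zero_triangular_sub_lt {x : ℝ} (hx : 1 ≤ x) :
    1 / lodgeDenom 0 (triangular x) - 1 / lodgeDenom 0 (triangular (x + 1)) <
      ∑ i ∈ range 5, (1 / (x + 1)) ^ (2 * i + 1) / (2 * i + 1) - 1 / (x + 1) := by
  have hm := one_le_triangular hx
  have hm' := one_le_triangular (le_add_of_le_of_nonneg hx zero_le_one)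
  have hpos := lodgePoly_pos (d := 0) (by norm_num) hm
  have hpos' := lodgePoly_pos (d := 0) (by norm_num) hm'
  have hsum : ∑ i ∈ range 5, (1 / (x + 1)) ^ (2 * i + 1) / (2 * i + 1) - 1 / (x + 1) =
      ((x + 1) ^ 6 / 3 + (x + 1) ^ 4 / 5 + (x + 1) ^ 2 / 7 + 1 / 9) / (x + 1) ^ 9 := by
    simp only [sum_range_succ, sum_range_zero, one_div_pow]
    push_cast
    field_simp
    ring
  rw [one_div_lodgeDenom_sub (by norm_num) hm hm', hsum,
    div_lt_div_iff₀ (by positivity) (by positivity), ← sub_pos]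
  -- The difference has only positive coefficients as a polynomial in `t = x - 1`.
  obtain ⟨t, ht, rfl⟩ : ∃ t ≥ 0, x = t + 1 := ⟨x - 1, by linarith, by ring⟩
  unfold lodgePoly triangular
  ring_nf
  positivity

theorem lt_one_div_lodgeDenom_triangular_sub {x : ℝ} (hx : 1 ≤ x) :
    ∑ i ∈ range 7, (1 / (x + 1)) ^ (2 * i + 1) / (2 * i + 1) +
        (1 / (x + 1)) ^ (2 * 7 + 1) / (1 - (1 / (x + 1)) ^ 2) - 1 / (x + 1) <
      1 / lodgeDenom (187969 / 4042500) (triangular x) -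
        1 / lodgeDenom (187969 / 4042500) (triangular (x + 1)) := by
  have hm := one_le_triangular hx
  have hm' := one_le_triangular (le_add_of_le_of_nonneg hx zero_le_one)
  have hpos := lodgePoly_pos (d := 187969 / 4042500) (by norm_num) hm
  have hpos' := lodgePoly_pos (d := 187969 / 4042500) (by norm_num) hm'
  have hremainder : (1 / (x + 1)) ^ (2 * 7 + 1) / (1 - (1 / (x + 1)) ^ 2) =
      1 / ((x + 1) ^ 13 * (x * (x + 2))) := by
    have hgeom : 1 - (1 / (x + 1)) ^ 2 = x * (x + 2) / (x + 1) ^ 2 := by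
      field_simp
      ring
    rw [hgeom, one_div_pow]
    field_simp
  have hsum : ∑ i ∈ range 7, (1 / (x + 1)) ^ (2 * i + 1) / (2 * i + 1) +
      (1 / (x + 1)) ^ (2 * 7 + 1) / (1 - (1 / (x + 1)) ^ 2) - 1 / (x + 1) =
      (((x + 1) ^ 10 / 3 + (x + 1) ^ 8 / 5 + (x + 1) ^ 6 / 7 + (x + 1) ^ 4 / 9 +
        (x + 1) ^ 2 / 11 + 1 / 13) * (x * (x + 2)) + 1) / ((x + 1) ^ 13 * (x * (x + 2))) := by
    rw [hremainder]
    simp only [sum_range_succ, sum_range_zero, one_div_pow]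
    push_cast
    field_simp
    ring
  rw [one_div_lodgeDenom_sub (by norm_num) hm hm', hsum,
    div_lt_div_iff₀ (by positivity) (by positivity), ← sub_pos]
  obtain ⟨t, ht, rfl⟩ : ∃ t ≥ 0, x = t + 1 := ⟨x - 1, by linarith, by ring⟩
  unfold lodgePoly triangular
  ring_nf
  positivity

theorem one_div_lodgeDenom_lt_harmonicError {n : ℕ} (hn : 1 ≤ n) :
    1 / lodgeDenom 0 (triangular n) < harmonicError n := by
  refine lt_of_tendsto_of_sub_succ_lt_sub_succ (tendsto_one_div_lodgeDenom_triangular 0)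
    tendsto_harmonicError (fun k hk ↦ ?_) hn
  have hk' : (1 : ℝ) ≤ k := by exact_mod_cast hk
  have hseries := sum_range_le_log_div (x := 1 / ((k : ℝ) + 1)) (by positivity)
    (by rw [div_lt_one (by positivity)]; linarith) 5
  rw [harmonicError_sub_succ (by omega), Nat.cast_add_one]
  exact (one_div_lodgeDenom_zero_triangular_sub_lt hk').trans_le (sub_le_sub_right hseries _)

theorem harmonicError_lt_one_div_lodgeDenom {n : ℕ} (hn : 1 ≤ n) :
    harmonicError n < 1 / lodgeDenom (187969 / 4042500) (triangular n) := by
  refine lt_of_tendsto_of_sub_succ_lt_sub_succ tendsto_harmonicError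
    (tendsto_one_div_lodgeDenom_triangular _) (fun k hk ↦ ?_) hn
  have hk' : (1 : ℝ) ≤ k := by exact_mod_cast hk
  have hseries := log_div_le_sum_range_add (x := 1 / ((k : ℝ) + 1)) (by positivity)
    (by rw [div_lt_one (by positivity)]; linarith) 7
  rw [harmonicError_sub_succ (by omega), Nat.cast_add_one]
  exact (sub_le_sub_right hseries _).trans_lt (lt_one_div_lodgeDenom_triangular_sub hk')

theorem lodge_Lambda_expansion (n : ℕ) (hn : 1 ≤ n) :
    ∃ δ : ℝ, 0 < δ ∧ δ < 187969 / 4042500 ∧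
      1 / ((harmonic n : ℝ) -
            ((1 / 2) * Real.log (2 * ((n * (n + 1) : ℝ) / 2)) +
              Real.eulerMascheroniConstant)) -
          12 * ((n * (n + 1) : ℝ) / 2) =
        6 / 5 - 19 / (175 * ((n * (n + 1) : ℝ) / 2)) +
          13 / (250 * ((n * (n + 1) : ℝ) / 2) ^ 2) -
          δ / ((n * (n + 1) : ℝ) / 2) ^ 3 := by
  have hm : 1 ≤ triangular n := one_le_triangular (by exact_mod_cast hn)
  have hlower := one_div_lodgeDenom_lt_harmonicError hn
  have hupper := harmonicError_lt_one_div_lodgeDenom hn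
  have hD₀ : 0 < lodgeDenom 0 (triangular n) := lodgeDenom_pos (by norm_num) hm
  have herror : 0 < harmonicError n := (one_div_pos.2 hD₀).trans hlower
  obtain ⟨δ, hδ_pos, hδ_lt, hδ⟩ := exists_lodgeDenom_eq (by linarith)
    ((lt_one_div herror (lodgeDenom_pos (by norm_num) hm)).1 hupper)
    ((one_div_lt hD₀ herror).1 hlower)
  refine ⟨δ, hδ_pos, hδ_lt, ?_⟩
  simp only [lodgeDenom, harmonicError, triangular] at hδ
  linarith
end

section
/- For every natural number n ≥ 1, define λ_n by H_n = ln(√(n(n+1))) + γ + 1/(6n(n+1) + λ_n). Then the sequence {λ_n} is strictly monotonically increasing. -/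
open Real

/-!
Put `m = n + 1` and let `eₙ` be the remainder `H_n - ln √(n (n + 1)) - γ`. Then
`eₙ - eₙ₊₁ = artanh (1 / m) - 1 / m`, an odd function of `m` with an explicit Taylor series, and
the claim `λₙ < λₙ₊₁` says that `12 m eₙ eₙ₊₁ < eₙ - eₙ₊₁`. It therefore suffices to have a
majorant `eₙ < 1 / g n` sharp enough that `12 m < g (m - 1) g m (artanh (1 / m) - 1 / m)`.
Since `eₙ` and `1 / g n` both tend to `0`, the majorant only has to be checked on consecutive
differences, where it reads `g (m - 1) g m (artanh (1 / m) - 1 / m) < g m - g (m - 1)`. For a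
suitable rational `g`, both are inequalities between polynomials in `m ^ 2`.
-/

section

open Filter Topology

theorem lt_of_sub_succ_lt_sub_succ {α : Type*} [AddCommGroup α] [PartialOrder α]
    [IsOrderedAddMonoid α] [TopologicalSpace α] [OrderClosedTopology α] [ContinuousSub α]
    {u v : ℕ → α} {a : α} {n : ℕ} (hu : Tendsto u atTop (𝓝 a)) (hv : Tendsto v atTop (𝓝 a))
    (h : ∀ k, n ≤ k → u k - u (k + 1) < v k - v (k + 1)) : u n < v n := by
  have hanti : StrictAnti fun k => v (n + k) - u (n + k) :=
    strictAnti_nat_of_succ_lt fun k => by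
      have := h (n + k) (Nat.le_add_right n k)
      rwa [sub_lt_sub_iff, add_comm (u _), ← sub_lt_sub_iff] at this
  have hlim : Tendsto (fun k => v (n + k) - u (n + k)) atTop (𝓝 0) := by
    have := (hv.sub hu).comp (tendsto_add_atTop_nat n)
    simpa only [sub_self, Function.comp_def, add_comm] using this
  exact sub_pos.mp ((hanti.antitone.le_of_tendsto hlim 1).trans_lt (hanti one_pos))

theorem hasSum_artanh {x : ℝ} (hx : |x| < 1) :
    HasSum (fun k : ℕ => x ^ (2 * k + 1) / (2 * k + 1)) (artanh x) := by
  obtain ⟨hl, hr⟩ := abs_lt.mp hx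
  rw [artanh_eq_half_log ⟨hl.le, hr.le⟩, log_div (by linarith) (by linarith)]
  exact ((hasSum_log_sub_log_of_abs_lt_one hx).mul_left (1 / 2)).congr_fun fun k => by ring

theorem sum_range_le_artanh {x : ℝ} (h₀ : 0 ≤ x) (h₁ : x < 1) (n : ℕ) :
    ∑ k ∈ Finset.range n, x ^ (2 * k + 1) / (2 * k + 1) ≤ artanh x := by
  rw [artanh_eq_half_log ⟨by linarith, h₁.le⟩]
  exact sum_range_le_log_div h₀ h₁ n

theorem artanh_le_sum_range_add {x : ℝ} (h₀ : 0 ≤ x) (h₁ : x < 1) (n : ℕ) :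
    artanh x ≤ ∑ k ∈ Finset.range n, x ^ (2 * k + 1) / (2 * k + 1) +
      x ^ (2 * n + 1) / ((2 * n + 1) * (1 - x ^ 2)) := by
  have htail := (hasSum_nat_add_iff' n).mpr (hasSum_artanh (abs_lt.mpr ⟨by linarith, h₁⟩))
  have hgeom := (hasSum_geometric_of_lt_one (sq_nonneg x) (by nlinarith)).mul_left
    (x ^ (2 * n + 1) / (2 * n + 1))
  rw [← sub_le_iff_le_add', ← div_div, div_eq_mul_inv _ (1 - x ^ 2)]
  refine hasSum_le (fun k => ?_) htail hgeom
  calc x ^ (2 * (k + n) + 1) / (2 * ((k + n : ℕ) : ℝ) + 1)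
      ≤ x ^ (2 * (k + n) + 1) / (2 * n + 1) := by gcongr; simp
    _ = x ^ (2 * n + 1) / (2 * n + 1) * (x ^ 2) ^ k := by ring

theorem le_artanh_inv_sub_inv {m : ℝ} (hm : 1 < m) :
    1 / (3 * m ^ 3) + 1 / (5 * m ^ 5) + 1 / (7 * m ^ 7) + 1 / (9 * m ^ 9) ≤
      artanh m⁻¹ - m⁻¹ := by
  have h := sum_range_le_artanh (inv_nonneg.mpr (by linarith)) (inv_lt_one_of_one_lt₀ hm) 5
  rw [le_sub_iff_add_le]
  refine le_of_eq_of_le ?_ h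
  simp only [Finset.sum_range_succ, Finset.sum_range_zero]
  push_cast
  ring

theorem artanh_inv_sub_inv_le {m : ℝ} (hm : 1 < m) :
    artanh m⁻¹ - m⁻¹ ≤
      1 / (3 * m ^ 3) + 1 / (5 * m ^ 5) + 1 / (7 * m ^ 7) + 1 / (9 * m ^ 7 * (m ^ 2 - 1)) := by
  have h := artanh_le_sum_range_add (inv_nonneg.mpr (by linarith)) (inv_lt_one_of_one_lt₀ hm) 4
  have hm₀ : m ≠ 0 := by positivity
  have hm₁ : m ^ 2 - 1 ≠ 0 := by nlinarith
  have htail : m⁻¹ ^ 9 / (9 * (1 - m⁻¹ ^ 2)) = 1 / (9 * m ^ 7 * (m ^ 2 - 1)) := by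
    have : 1 - m⁻¹ ^ 2 = (m ^ 2 - 1) / m ^ 2 := by field_simp
    rw [this]
    field_simp
  rw [sub_le_iff_le_add, ← htail]
  refine h.trans_eq ?_
  simp only [Finset.sum_range_succ, Finset.sum_range_zero]
  push_cast
  ring

/-- The remainder `1 / (6 n (n + 1) + λₙ)` in Ramanujan's expansion of the harmonic numbers. -/
noncomputable def harmonicRemainder (n : ℕ) : ℝ :=
  (harmonic n : ℝ) - log √(n * (n + 1)) - eulerMascheroniConstant

theorem harmonicRemainder_sub_succ {n : ℕ} (hn : 1 ≤ n) :
    harmonicRemainder n - harmonicRemainder (n + 1) =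
      artanh ((n : ℝ) + 1)⁻¹ - ((n : ℝ) + 1)⁻¹ := by
  have : (0 : ℝ) < n := by exact_mod_cast hn
  have hquot : (1 + ((n : ℝ) + 1)⁻¹) / (1 - ((n : ℝ) + 1)⁻¹) =
      ((n + 1) * (n + 1 + 1)) / (n * (n + 1)) := by
    have : 1 - ((n : ℝ) + 1)⁻¹ = n / (n + 1) := by field_simp; ring
    rw [this]
    field_simp
  rw [artanh, hquot, sqrt_div (by positivity), log_div (by positivity) (by positivity)]
  simp only [harmonicRemainder, harmonic_succ]
  push_cast
  ring

theorem tendsto_harmonicRemainder : Tendsto harmonicRemainder atTop (𝓝 0) := by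
  have hmean := ((tendsto_harmonic_sub_log.add tendsto_harmonic_sub_log_add_one).div_const
    2).sub_const eulerMascheroniConstant
  rw [add_self_div_two, sub_self] at hmean
  refine hmean.congr' ?_
  filter_upwards [eventually_ge_atTop 1] with n hn
  have : (0 : ℝ) < n := by exact_mod_cast hn
  rw [harmonicRemainder, log_sqrt (by positivity), log_mul (by positivity) (by positivity)]
  ring

theorem harmonicRemainder_pos {n : ℕ} (hn : 1 ≤ n) : 0 < harmonicRemainder n := by
  refine lt_of_sub_succ_lt_sub_succ (u := fun _ => 0) tendsto_const_nhds
    tendsto_harmonicRemainder fun k hk => ?_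
  have hk₁ : (1 : ℝ) < k + 1 := by exact_mod_cast Nat.lt_succ_of_le (hn.trans hk)
  rw [sub_self, harmonicRemainder_sub_succ (hn.trans hk)]
  exact lt_of_lt_of_le (by positivity) (le_artanh_inv_sub_inv hk₁)

/-- A lower bound for `6 n (n + 1) + λₙ` at `x = n`. Asymptotically
`λₙ = 6 / 5 - 38 / (175 N) + O(1 / N ^ 2)` with `N = n (n + 1)`; the correction
`1 / (4 (N + 1))` replaces the second term, with `1 / 4` slightly above `38 / 175` and `N + 1`
instead of `N` so that the two inequalities required of the bound hold already from `n = 1`. -/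
noncomputable def recipLowerBound (x : ℝ) : ℝ :=
  6 * x * (x + 1) + 6 / 5 - 1 / (4 * (x * (x + 1) + 1))

theorem lt_recipLowerBound {x : ℝ} (hx : 0 ≤ x) : x < recipLowerBound x := by
  have : 1 / (4 * (x * (x + 1) + 1)) ≤ 1 := by
    rw [div_le_one₀ (by positivity)]
    nlinarith
  unfold recipLowerBound
  nlinarith

theorem recipLowerBound_pos {x : ℝ} (hx : 0 ≤ x) : 0 < recipLowerBound x :=
  hx.trans_lt (lt_recipLowerBound hx)

theorem tendsto_recipLowerBound_atTop : Tendsto recipLowerBound atTop atTop :=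
  tendsto_atTop_mono' _ ((eventually_ge_atTop 0).mono fun _ hx => (lt_recipLowerBound hx).le)
    tendsto_id

theorem mul_add_one_add_one_pos (x : ℝ) : 0 < x * (x + 1) + 1 := by
  nlinarith [sq_nonneg (2 * x + 1)]

theorem recipLowerBound_sub_pred (m : ℝ) :
    recipLowerBound m - recipLowerBound (m - 1) = 12 * m + m / (2 * (m ^ 4 + m ^ 2 + 1)) := by
  have hm := (mul_add_one_add_one_pos m).ne'
  have hpred := (mul_add_one_add_one_pos (m - 1)).ne'
  have hfactor : m ^ 4 + m ^ 2 + 1 = (m * (m + 1) + 1) * ((m - 1) * (m - 1 + 1) + 1) := by ring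
  rw [hfactor, recipLowerBound, recipLowerBound]
  field_simp
  ring

theorem recipLowerBound_pred_mul (m : ℝ) :
    recipLowerBound (m - 1) * recipLowerBound m =
      (14400 * m ^ 8 + 5760 * m ^ 6 + 5136 * m ^ 4 - 10704 * m ^ 2 + 361) /
        (400 * (m ^ 4 + m ^ 2 + 1)) := by
  have hm := (mul_add_one_add_one_pos m).ne'
  have hpred := (mul_add_one_add_one_pos (m - 1)).ne'
  have hfactor : m ^ 4 + m ^ 2 + 1 = (m * (m + 1) + 1) * ((m - 1) * (m - 1 + 1) + 1) := by ring
  rw [hfactor, recipLowerBound, recipLowerBound]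
  field_simp
  ring

theorem twelve_mul_lt_recipLowerBound_pred_mul {m : ℝ} (hm : 2 ≤ m) :
    12 * m < recipLowerBound (m - 1) * recipLowerBound m * (artanh m⁻¹ - m⁻¹) := by
  -- Expanding in powers of `m ^ 2 - 4` makes all coefficients positive.
  have hnum : 0 < 38160 * m ^ 10 - 37152 * m ^ 8 - 203727 * m ^ 6 - 279177 * m ^ 4 -
      358395 * m ^ 2 + 12635 := by
    obtain ⟨t, ht, hmt⟩ := exists_nonneg_add_of_le (show 4 ≤ m ^ 2 by nlinarith)
    calc 0 < 38160 * t ^ 5 + 726048 * t ^ 4 + 5307441 * t ^ 3 + 18131907 * t ^ 2 +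
          26963181 * t + 10638623 := by positivity
      _ = 38160 * (4 + t) ^ 5 - 37152 * (4 + t) ^ 4 - 203727 * (4 + t) ^ 3 -
          279177 * (4 + t) ^ 2 - 358395 * (4 + t) + 12635 := by ring
      _ = _ := by rw [hmt]; ring
  have hdiff : recipLowerBound (m - 1) * recipLowerBound m *
      (1 / (3 * m ^ 3) + 1 / (5 * m ^ 5) + 1 / (7 * m ^ 7) + 1 / (9 * m ^ 9)) - 12 * m =
      (38160 * m ^ 10 - 37152 * m ^ 8 - 203727 * m ^ 6 - 279177 * m ^ 4 - 358395 * m ^ 2 +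
        12635) / (126000 * m ^ 9 * (m ^ 4 + m ^ 2 + 1)) := by
    rw [recipLowerBound_pred_mul]
    field_simp
    ring
  calc 12 * m < recipLowerBound (m - 1) * recipLowerBound m *
        (1 / (3 * m ^ 3) + 1 / (5 * m ^ 5) + 1 / (7 * m ^ 7) + 1 / (9 * m ^ 9)) := by
        rw [← sub_pos, hdiff]
        positivity
    _ ≤ _ := mul_le_mul_of_nonneg_left (le_artanh_inv_sub_inv (by linarith))
        (mul_pos (recipLowerBound_pos (by linarith)) (recipLowerBound_pos (by linarith))).le

theorem recipLowerBound_pred_mul_lt_sub {m : ℝ} (hm : 2 ≤ m) :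
    recipLowerBound (m - 1) * recipLowerBound m * (artanh m⁻¹ - m⁻¹) <
      recipLowerBound m - recipLowerBound (m - 1) := by
  have hsq : 0 < m ^ 2 - 1 := by nlinarith
  have hnum : 0 < 24840 * m ^ 10 + 12312 * m ^ 8 - 337425 * m ^ 6 - 126150 * m ^ 4 -
      100542 * m ^ 2 + 3610 := by
    obtain ⟨t, ht, hmt⟩ := exists_nonneg_add_of_le (show 4 ≤ m ^ 2 by nlinarith)
    calc 0 < 24840 * t ^ 5 + 509112 * t ^ 4 + 3833967 * t ^ 3 + 12904302 * t ^ 2 +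
          17640930 * t + 4575874 := by positivity
      _ = 24840 * (4 + t) ^ 5 + 12312 * (4 + t) ^ 4 - 337425 * (4 + t) ^ 3 -
          126150 * (4 + t) ^ 2 - 100542 * (4 + t) + 3610 := by ring
      _ = _ := by rw [hmt]; ring
  have hdiff : recipLowerBound m - recipLowerBound (m - 1) -
      recipLowerBound (m - 1) * recipLowerBound m *
        (1 / (3 * m ^ 3) + 1 / (5 * m ^ 5) + 1 / (7 * m ^ 7) + 1 / (9 * m ^ 7 * (m ^ 2 - 1))) =
      (24840 * m ^ 10 + 12312 * m ^ 8 - 337425 * m ^ 6 - 126150 * m ^ 4 - 100542 * m ^ 2 +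
        3610) / (126000 * m ^ 7 * (m ^ 2 - 1) * (m ^ 4 + m ^ 2 + 1)) := by
    rw [recipLowerBound_sub_pred, recipLowerBound_pred_mul]
    field_simp
    ring
  calc recipLowerBound (m - 1) * recipLowerBound m * (artanh m⁻¹ - m⁻¹)
      ≤ recipLowerBound (m - 1) * recipLowerBound m * (1 / (3 * m ^ 3) + 1 / (5 * m ^ 5) +
          1 / (7 * m ^ 7) + 1 / (9 * m ^ 7 * (m ^ 2 - 1))) :=
        mul_le_mul_of_nonneg_left (artanh_inv_sub_inv_le (by linarith))
          (mul_pos (recipLowerBound_pos (by linarith)) (recipLowerBound_pos (by linarith))).le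
    _ < _ := by
        rw [← sub_pos, hdiff]
        positivity

theorem harmonicRemainder_lt_inv {n : ℕ} (hn : 1 ≤ n) :
    harmonicRemainder n < (recipLowerBound n)⁻¹ := by
  have hlim : Tendsto (fun k : ℕ => (recipLowerBound k)⁻¹) atTop (𝓝 0) :=
    (tendsto_recipLowerBound_atTop.comp tendsto_natCast_atTop_atTop).inv_tendsto_atTop
  refine lt_of_sub_succ_lt_sub_succ tendsto_harmonicRemainder hlim fun k hk => ?_
  have hk₁ : (1 : ℝ) ≤ k := by exact_mod_cast hn.trans hk
  have hg : 0 < recipLowerBound k := recipLowerBound_pos (by linarith)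
  have hg_succ : 0 < recipLowerBound (k + 1) := recipLowerBound_pos (by linarith)
  have hdiff := recipLowerBound_pred_mul_lt_sub (m := k + 1) (by linarith)
  rw [add_sub_cancel_right] at hdiff
  push_cast
  rwa [harmonicRemainder_sub_succ (hn.trans hk), inv_sub_inv hg.ne' hg_succ.ne',
    lt_div_iff₀' (mul_pos hg hg_succ)]

theorem twelve_mul_lt_inv_harmonicRemainder_succ_sub {n : ℕ} (hn : 1 ≤ n) :
    12 * ((n : ℝ) + 1) < (harmonicRemainder (n + 1))⁻¹ - (harmonicRemainder n)⁻¹ := by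
  have hn₁ : (1 : ℝ) ≤ n := by exact_mod_cast hn
  have hpos := harmonicRemainder_pos hn
  have hpos_succ := harmonicRemainder_pos (Nat.le_add_left 1 n)
  have hlt := harmonicRemainder_lt_inv hn
  have hlt_succ := harmonicRemainder_lt_inv (Nat.le_add_left 1 n)
  have hg : 0 < recipLowerBound n * recipLowerBound (n + 1) :=
    mul_pos (recipLowerBound_pos (by linarith)) (recipLowerBound_pos (by linarith))
  have hdiff := twelve_mul_lt_recipLowerBound_pred_mul (m := n + 1) (by linarith)
  rw [add_sub_cancel_right, ← harmonicRemainder_sub_succ hn, ← div_lt_iff₀' hg] at hdiff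
  push_cast at hlt_succ
  rw [inv_sub_inv hpos_succ.ne' hpos.ne', lt_div_iff₀ (mul_pos hpos_succ hpos)]
  calc 12 * ((n : ℝ) + 1) * (harmonicRemainder (n + 1) * harmonicRemainder n)
      ≤ 12 * ((n : ℝ) + 1) * ((recipLowerBound (n + 1))⁻¹ * (recipLowerBound n)⁻¹) := by
        have := hpos_succ.trans hlt_succ
        gcongr
    _ = 12 * ((n : ℝ) + 1) / (recipLowerBound n * recipLowerBound (n + 1)) := by
        rw [← mul_inv_rev, div_eq_mul_inv]
    _ < harmonicRemainder n - harmonicRemainder (n + 1) := hdiff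

end

theorem lambda_strictMono :
    StrictMonoOn
      (fun n : ℕ =>
        1 / ((harmonic n : ℝ) - Real.log (Real.sqrt (n * (n + 1))) -
            Real.eulerMascheroniConstant) - 6 * n * (n + 1))
      (Set.Ici 1) := by
  refine strictMonoOn_of_lt_add_one Set.ordConnected_Ici fun n _ hn _ => ?_
  change 1 / harmonicRemainder n - _ < 1 / harmonicRemainder (n + 1) - _
  have hstep := twelve_mul_lt_inv_harmonicRemainder_succ_sub hn
  rw [one_div, one_div]
  push_cast
  linarith
end

section
/- For every positive integer n and every positive integer r there exists θ_r with 0 < θ_r < 1 such that H_n = ln(n + 1/2) + γ + ∑_{p=1}^r D_p/(n + 1/2)^{2p} + θ_r · D_{r+1}/(n + 1/2)^{2r+2}, where D_p := −B_{2p}(1/2)/(2p) and B_{2p}(x) is the Bernoulli polynomial of order 2p. -/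
open Real Finset

/-- The coefficient `D_p = -B_{2p}(1/2)/(2p)` in the DeTemple--Wang expansion. -/
noncomputable def detempleWangCoeff (p : ℕ) : ℝ :=
  -(((Polynomial.bernoulli (2 * p)).eval ((1 : ℚ) / 2) : ℚ) : ℝ) / (2 * p)

/-!
The midpoint Euler–Maclaurin formula on the unit interval around `n + 1`, applied to `x ↦ 1 / x`,
shows that the error after `r` terms of the expansion changes by
`(1 / (2r+1)!) ∫_0^{1/2} S(v) B_{2r+1}(v) dv` when `n` is replaced by `n + 1`, where `S` is the
derivative of order `2r+1` of `v ↦ 1 / (n+1+v) + 1 / (n+1-v)`. Here `S > 0`, and `B_{2r+1}` has the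
constant sign `(-1)^{r+1}` on `(0, 1/2)`, so `(-1)^r` times the error is strictly decreasing in `n`.
As the error tends to `0`, it has the sign `(-1)^r`. Hence two consecutive errors have
opposite signs, and this places the error strictly between `0` and the first omitted term.
-/

namespace DeTempleWang

open Filter Topology MeasureTheory
open scoped Nat

lemma exists_eq_mul_of_mul_sub_neg {K : Type*} [Field K] [LinearOrder K] [IsStrictOrderedRing K]
    {a d : K} (h : a * (a - d) < 0) : ∃ θ, 0 < θ ∧ θ < 1 ∧ a = θ * d := by
  have hd : d ≠ 0 := by
    rintro rfl
    exact h.not_ge (by simpa using mul_self_nonneg a)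
  have hquot : a / d * (a / d - 1) < 0 := by
    rw [div_sub_one hd, div_mul_div_comm]
    exact div_neg_of_neg_of_pos h (mul_self_pos.2 hd)
  obtain ⟨hpos, hlt⟩ | ⟨hneg, hgt⟩ := mul_neg_iff.1 hquot
  · exact ⟨a / d, hpos, sub_neg.1 hlt, (div_mul_cancel₀ a hd).symm⟩
  · linarith

section BernoulliFunctions

lemma bernoulliFun_odd_zero {k : ℕ} (hk : 0 < k) : bernoulliFun (2 * k + 1) 0 = 0 := by
  rw [bernoulliFun_eval_zero, bernoulli_eq_zero_of_odd (odd_two_mul_add_one k) (by lia),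
    Rat.cast_zero]

lemma bernoulliFun_odd_half (k : ℕ) : bernoulliFun (2 * k + 1) (1 / 2) = 0 := by
  rw [one_div, bernoulliFun_eval_half_eq_zero]

lemma neg_of_strictConvexOn_of_endpoints_eq_zero {f : ℝ → ℝ} {a b x : ℝ}
    (hf : StrictConvexOn ℝ (Set.Icc a b) f) (ha : f a = 0) (hb : f b = 0)
    (hx : x ∈ Set.Ioo a b) : f x < 0 := by
  have hab : a < b := hx.1.trans hx.2
  simpa [ha, hb] using hf.lt_on_openSegment (Set.left_mem_Icc.2 hab.le)
    (Set.right_mem_Icc.2 hab.le) hab.ne (openSegment_eq_Ioo hab ▸ hx)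

lemma deriv2_const_mul_bernoulliFun (c : ℝ) (k : ℕ) (x : ℝ) :
    deriv^[2] (fun y => c * bernoulliFun (k + 2) y) x =
      (k + 2) * (k + 1) * (c * bernoulliFun k x) := by
  simp only [Function.iterate_succ, Function.iterate_zero, Function.comp_apply, id_eq,
    deriv_const_mul_field', deriv_bernoulliFun]
  push_cast [Nat.add_sub_cancel]
  ring

lemma bernoulliFun_odd_sign (k : ℕ) {x : ℝ} (hx : x ∈ Set.Ioo (0 : ℝ) (1 / 2)) :
    0 < (-1) ^ (k + 1) * bernoulliFun (2 * k + 1) x := by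
  induction k generalizing x with
  | zero =>
    simp only [mul_zero, zero_add, pow_one, bernoulliFun_one]
    linarith [hx.2]
  | succ k ih =>
    have hconvex : StrictConvexOn ℝ (Set.Icc (0 : ℝ) (1 / 2))
        (fun y => (-1) ^ (k + 1) * bernoulliFun (2 * k + 1 + 2) y) := by
      refine strictConvexOn_of_deriv2_pos (convex_Icc _ _) (by fun_prop) fun y hy => ?_
      rw [interior_Icc] at hy
      rw [deriv2_const_mul_bernoulliFun]
      have := ih hy
      positivity
    have hneg := neg_of_strictConvexOn_of_endpoints_eq_zero hconvex
      (mul_eq_zero_of_right _ (bernoulliFun_odd_zero k.succ_pos))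
      (mul_eq_zero_of_right _ (bernoulliFun_odd_half (k + 1))) hx
    rw [pow_succ, mul_neg_one, neg_mul]
    exact neg_pos.2 hneg

lemma integral_mul_bernoulliFun {g g' : ℝ → ℝ} {a b : ℝ} (k : ℕ)
    (hg : ∀ x ∈ Set.uIcc a b, HasDerivAt g (g' x) x) (hg' : IntervalIntegrable g' volume a b) :
    ∫ x in a..b, g x * bernoulliFun k x =
      (g b * bernoulliFun (k + 1) b - g a * bernoulliFun (k + 1) a -
        ∫ x in a..b, g' x * bernoulliFun (k + 1) x) / (k + 1) := by
  rw [intervalIntegral.integral_mul_deriv_eq_deriv_mul hg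
    (fun x _ => antideriv_bernoulliFun k x) hg' (intervalIntegrable_bernoulliFun k a b)]
  simp only [← mul_div_assoc, intervalIntegral.integral_div, sub_div]

end BernoulliFunctions

section MidpointEulerMaclaurin

variable {f : ℝ → ℝ} {m v : ℝ}

lemma hasDerivAt_iteratedDeriv {j : ℕ} {x : ℝ} (hf : ContDiffAt ℝ (j + 1 : ℕ) f x) :
    HasDerivAt (iteratedDeriv j f) (iteratedDeriv (j + 1) f x) x := by
  have h := ContDiffWithinAt.differentiableWithinAt_iteratedDerivWithin (s := Set.univ) hf
    (by exact_mod_cast j.lt_succ_self) (by simp)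
  rw [iteratedDerivWithin_univ, differentiableWithinAt_univ] at h
  simpa only [iteratedDeriv_succ] using h.hasDerivAt

lemma continuousAt_iteratedDeriv {j : ℕ} {x : ℝ} (hf : ContDiffAt ℝ j f x) :
    ContinuousAt (iteratedDeriv j f) x := by
  rw [iteratedDeriv_eq_equiv_comp]
  exact (LinearIsometryEquiv.continuous _).continuousAt.comp
    (hf.iteratedFDeriv_right (m := 0) (by simp)).continuousAt

/-- The `j`-th derivative of the symmetrisation `v ↦ f (m + v) + f (m - v)` of `f` about `m`. -/
noncomputable def symmDeriv (f : ℝ → ℝ) (m : ℝ) (j : ℕ) (v : ℝ) : ℝ :=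
  iteratedDeriv j f (m + v) + (-1) ^ j * iteratedDeriv j f (m - v)

lemma symmDeriv_odd (f : ℝ → ℝ) (m : ℝ) (k : ℕ) (v : ℝ) :
    symmDeriv f m (2 * k + 1) v =
      iteratedDeriv (2 * k + 1) f (m + v) - iteratedDeriv (2 * k + 1) f (m - v) := by
  rw [symmDeriv, (odd_two_mul_add_one k).neg_one_pow]
  ring

lemma hasDerivAt_symmDeriv {j : ℕ} (hadd : ContDiffAt ℝ (j + 1 : ℕ) f (m + v))
    (hsub : ContDiffAt ℝ (j + 1 : ℕ) f (m - v)) :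
    HasDerivAt (symmDeriv f m j) (symmDeriv f m (j + 1) v) v := by
  refine (((hasDerivAt_iteratedDeriv hadd).comp_const_add m v).add
    (((hasDerivAt_iteratedDeriv hsub).comp_const_sub m v).const_mul ((-1) ^ j))).congr_deriv ?_
  rw [symmDeriv, pow_succ]
  ring

lemma add_mem_and_sub_mem_Icc (hv : v ∈ Set.uIcc (0 : ℝ) (1 / 2)) :
    m + v ∈ Set.Icc (m - 1 / 2) (m + 1 / 2) ∧ m - v ∈ Set.Icc (m - 1 / 2) (m + 1 / 2) := by
  rw [Set.uIcc_of_le (by norm_num)] at hv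
  obtain ⟨hv0, hv1⟩ := hv
  exact ⟨⟨by linarith, by linarith⟩, by linarith, by linarith⟩

lemma continuousOn_symmDeriv {j : ℕ}
    (hf : ∀ x ∈ Set.Icc (m - 1 / 2) (m + 1 / 2), ContDiffAt ℝ j f x) :
    ContinuousOn (symmDeriv f m j) (Set.uIcc 0 (1 / 2)) := by
  intro v hv
  obtain ⟨hadd, hsub⟩ := add_mem_and_sub_mem_Icc (m := m) hv
  have hcont_add : ContinuousAt (fun u => iteratedDeriv j f (m + u)) v :=
    (continuousAt_iteratedDeriv (hf _ hadd)).comp (f := fun u => m + u) (by fun_prop)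
  have hcont_sub : ContinuousAt (fun u => iteratedDeriv j f (m - u)) v :=
    (continuousAt_iteratedDeriv (hf _ hsub)).comp (f := fun u => m - u) (by fun_prop)
  exact (hcont_add.add (continuousAt_const.mul hcont_sub)).continuousWithinAt

/-- The remainder of order `j` in the midpoint Euler–Maclaurin formula for `f` on
`[m - 1/2, m + 1/2]`, folded onto `[0, 1/2]` by the symmetry of that interval about `m`. -/
noncomputable def midpointRemainder (f : ℝ → ℝ) (m : ℝ) (j : ℕ) : ℝ :=
  (∫ v in (0 : ℝ)..(1 / 2), symmDeriv f m j v * bernoulliFun j v) / j !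

lemma midpointRemainder_eq_sub_succ {j : ℕ}
    (hf : ∀ x ∈ Set.Icc (m - 1 / 2) (m + 1 / 2), ContDiffAt ℝ (j + 1 : ℕ) f x) :
    midpointRemainder f m j =
      (symmDeriv f m j (1 / 2) * bernoulliFun (j + 1) (1 / 2) -
        symmDeriv f m j 0 * bernoulliFun (j + 1) 0) / (j + 1)! - midpointRemainder f m (j + 1) := by
  have hderiv : ∀ v ∈ Set.uIcc (0 : ℝ) (1 / 2),
      HasDerivAt (symmDeriv f m j) (symmDeriv f m (j + 1) v) v := fun v hv =>
    have ⟨hadd, hsub⟩ := add_mem_and_sub_mem_Icc hv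
    hasDerivAt_symmDeriv (hf _ hadd) (hf _ hsub)
  rw [midpointRemainder, midpointRemainder, integral_mul_bernoulliFun j hderiv
    (continuousOn_symmDeriv hf).intervalIntegrable, ← sub_div, div_div, Nat.factorial_succ,
    Nat.cast_mul, Nat.cast_succ]

lemma midpointRemainder_zero (hf : ContinuousOn f (Set.Icc (m - 1 / 2) (m + 1 / 2))) :
    midpointRemainder f m 0 = ∫ x in (m - 1 / 2)..(m + 1 / 2), f x := by
  have hleft : IntervalIntegrable f volume (m - 1 / 2) m :=
    (hf.mono (Set.uIcc_of_le (by linarith : m - 1 / 2 ≤ m) ▸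
      Set.Icc_subset_Icc_right (by linarith))).intervalIntegrable
  have hright : IntervalIntegrable f volume m (m + 1 / 2) :=
    (hf.mono (Set.uIcc_of_le (by linarith : m ≤ m + 1 / 2) ▸
      Set.Icc_subset_Icc_left (by linarith))).intervalIntegrable
  have hadd : IntervalIntegrable (fun v => f (m + v)) volume 0 (1 / 2) := by
    simpa using hright.comp_add_left m
  have hsub : IntervalIntegrable (fun v => f (m - v)) volume 0 (1 / 2) := by
    simpa using (hleft.comp_sub_left m).symm
  simp only [midpointRemainder, symmDeriv, iteratedDeriv_zero, bernoulliFun_zero, pow_zero,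
    one_mul, mul_one, Nat.factorial_zero, Nat.cast_one, div_one]
  rw [intervalIntegral.integral_add hadd hsub, intervalIntegral.integral_comp_add_left,
    intervalIntegral.integral_comp_sub_left, add_zero, sub_zero, add_comm,
    intervalIntegral.integral_add_adjacent_intervals hleft hright]

lemma midpointRemainder_one
    (hf : ∀ x ∈ Set.Icc (m - 1 / 2) (m + 1 / 2), ContDiffAt ℝ 1 f x) :
    midpointRemainder f m 1 = f m - ∫ x in (m - 1 / 2)..(m + 1 / 2), f x := by
  have h := midpointRemainder_eq_sub_succ (j := 0) hf
  rw [midpointRemainder_zero fun x hx => (hf x hx).continuousAt.continuousWithinAt] at h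
  rw [h]
  simp only [symmDeriv, iteratedDeriv_zero, bernoulliFun_one, pow_zero, zero_add, add_zero,
    sub_zero, Nat.factorial_one, Nat.cast_one]
  ring

lemma midpointRemainder_odd {k : ℕ}
    (hf : ∀ x ∈ Set.Icc (m - 1 / 2) (m + 1 / 2), ContDiffAt ℝ (2 * k + 3 : ℕ) f x) :
    midpointRemainder f m (2 * k + 1) =
      bernoulliFun (2 * k + 2) (1 / 2) / (2 * k + 2)! *
        (iteratedDeriv (2 * k + 1) f (m + 1 / 2) - iteratedDeriv (2 * k + 1) f (m - 1 / 2)) +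
      midpointRemainder f m (2 * k + 3) := by
  have hzero : bernoulliFun (2 * k + 3) 0 = 0 := bernoulliFun_odd_zero k.succ_pos
  have hhalf : bernoulliFun (2 * k + 3) (1 / 2) = 0 := bernoulliFun_odd_half (k + 1)
  rw [midpointRemainder_eq_sub_succ fun x hx => (hf x hx).of_le (by norm_cast; lia),
    midpointRemainder_eq_sub_succ hf, hzero, hhalf, symmDeriv_odd, symmDeriv_odd]
  ring_nf

lemma midpointRemainder_odd_sign {k : ℕ}
    (hf : ∀ x ∈ Set.Icc (m - 1 / 2) (m + 1 / 2), ContDiffAt ℝ (2 * k + 1 : ℕ) f x)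
    (hmono : StrictMonoOn (iteratedDeriv (2 * k + 1) f) (Set.Icc (m - 1 / 2) (m + 1 / 2))) :
    0 < (-1) ^ (k + 1) * midpointRemainder f m (2 * k + 1) := by
  rw [midpointRemainder, ← mul_div_assoc, ← intervalIntegral.integral_const_mul]
  refine div_pos (intervalIntegral.intervalIntegral_pos_of_pos_on ?_ (fun v hv => ?_)
    (by norm_num)) (by positivity)
  · exact (continuousOn_const.mul ((continuousOn_symmDeriv hf).mul
      (continuous_bernoulliFun _).continuousOn)).intervalIntegrable
  · obtain ⟨hadd, hsub⟩ := add_mem_and_sub_mem_Icc (m := m)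
      (Set.Icc_subset_uIcc (Set.Ioo_subset_Icc_self hv))
    have hpos : 0 < symmDeriv f m (2 * k + 1) v := by
      rw [symmDeriv_odd, sub_pos]
      exact hmono hsub hadd (by linarith [hv.1])
    rw [mul_left_comm]
    exact mul_pos hpos (bernoulliFun_odd_sign k hv)

end MidpointEulerMaclaurin

section Reciprocal

lemma iteratedDeriv_odd_inv (k : ℕ) (x : ℝ) :
    iteratedDeriv (2 * k + 1) Inv.inv x = -((2 * k + 1)! / x ^ (2 * k + 2)) := by
  rw [iteratedDeriv_eq_iterate, iter_deriv_inv, (odd_two_mul_add_one k).neg_one_pow,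
    show (-1 - (2 * k + 1 : ℕ) : ℤ) = -(2 * k + 2 : ℕ) by push_cast; ring, zpow_neg, zpow_natCast]
  ring

lemma strictMonoOn_iteratedDeriv_odd_inv (k : ℕ) :
    StrictMonoOn (iteratedDeriv (2 * k + 1) (Inv.inv : ℝ → ℝ)) (Set.Ioi 0) := by
  intro x (hx : 0 < x) y _ hxy
  rw [iteratedDeriv_odd_inv, iteratedDeriv_odd_inv]
  gcongr

lemma detempleWangCoeff_eq_bernoulliFun (p : ℕ) :
    detempleWangCoeff p = -bernoulliFun (2 * p) (1 / 2) / (2 * p) := by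
  rw [detempleWangCoeff, bernoulliFun, show (1 / 2 : ℝ) = algebraMap ℚ ℝ (1 / 2) by simp,
    Polynomial.eval_map_apply, eq_ratCast]

variable {m : ℝ}

lemma contDiffAt_inv_of_mem_Icc (hm : 1 / 2 < m) {j : ℕ} :
    ∀ x ∈ Set.Icc (m - 1 / 2) (m + 1 / 2), ContDiffAt ℝ j Inv.inv x := fun x hx =>
  contDiffAt_inv ℝ (by linarith [hx.1] : 0 < x).ne'

lemma midpointRemainder_inv_one (hm : 1 / 2 < m) :
    midpointRemainder Inv.inv m 1 = m⁻¹ - (log (m + 1 / 2) - log (m - 1 / 2)) := by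
  have hlo : 0 < m - 1 / 2 := by linarith
  have hhi : 0 < m + 1 / 2 := by linarith
  rw [midpointRemainder_one (contDiffAt_inv_of_mem_Icc (j := 1) hm),
    integral_inv_of_pos hlo hhi, log_div hhi.ne' hlo.ne']

lemma midpointRemainder_inv_odd (hm : 1 / 2 < m) (k : ℕ) :
    midpointRemainder Inv.inv m (2 * k + 1) =
      detempleWangCoeff (k + 1) / (m + 1 / 2) ^ (2 * k + 2) -
        detempleWangCoeff (k + 1) / (m - 1 / 2) ^ (2 * k + 2) +
      midpointRemainder Inv.inv m (2 * k + 3) := by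
  rw [midpointRemainder_odd (contDiffAt_inv_of_mem_Icc hm), iteratedDeriv_odd_inv,
    iteratedDeriv_odd_inv, detempleWangCoeff_eq_bernoulliFun, Nat.factorial_succ (2 * k + 1),
    show 2 * (k + 1) = 2 * k + 2 by ring]
  push_cast
  field_simp
  ring

lemma midpointRemainder_inv_sign (hm : 1 / 2 < m) (k : ℕ) :
    0 < (-1) ^ (k + 1) * midpointRemainder Inv.inv m (2 * k + 1) :=
  midpointRemainder_odd_sign (contDiffAt_inv_of_mem_Icc hm)
    ((strictMonoOn_iteratedDeriv_odd_inv k).mono fun _ hx =>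
      (sub_pos.2 hm).trans_le hx.1)

end Reciprocal

section HarmonicRemainder

/-- The error made in approximating `H_n` by the first `r` terms of its DeTemple–Wang expansion. -/
noncomputable def harmonicRemainder (r n : ℕ) : ℝ :=
  harmonic n - (log (n + 1 / 2) + eulerMascheroniConstant +
    ∑ p ∈ Icc 1 r, detempleWangCoeff p / (n + 1 / 2 : ℝ) ^ (2 * p))

lemma harmonicRemainder_succ_terms (r n : ℕ) :
    harmonicRemainder (r + 1) n =
      harmonicRemainder r n - detempleWangCoeff (r + 1) / (n + 1 / 2 : ℝ) ^ (2 * r + 2) := by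
  rw [harmonicRemainder, harmonicRemainder, sum_Icc_succ_top (by lia), mul_add_one]
  ring

lemma harmonicRemainder_succ_sub (r n : ℕ) :
    harmonicRemainder r (n + 1) - harmonicRemainder r n =
      midpointRemainder Inv.inv (n + 1) (2 * r + 1) := by
  have hm : (1 / 2 : ℝ) < n + 1 := by linarith [n.cast_nonneg (α := ℝ)]
  have hlo : (n : ℝ) + 1 - 1 / 2 = n + 1 / 2 := by ring
  induction r with
  | zero =>
    rw [mul_zero, zero_add, midpointRemainder_inv_one hm, hlo]
    simp only [harmonicRemainder, harmonic_succ, Icc_eq_empty_of_lt one_pos, sum_empty]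
    push_cast
    ring
  | succ r ih =>
    have hstep := midpointRemainder_inv_odd hm r
    rw [← ih, hlo] at hstep
    rw [harmonicRemainder_succ_terms, harmonicRemainder_succ_terms, mul_add_one]
    push_cast
    linarith

lemma tendsto_harmonicRemainder (r : ℕ) : Tendsto (harmonicRemainder r) atTop (𝓝 0) := by
  have hshift : Tendsto (fun n : ℕ => (n : ℝ) + 1 / 2) atTop atTop :=
    tendsto_atTop_add_const_right _ _ tendsto_natCast_atTop_atTop
  have hsum : Tendsto (fun n : ℕ => ∑ p ∈ Icc 1 r,
      detempleWangCoeff p / ((n : ℝ) + 1 / 2) ^ (2 * p)) atTop (𝓝 (∑ _ ∈ Icc 1 r, 0)) :=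
    tendsto_finsetSum _ fun _ hp => tendsto_const_nhds.div_atTop
      ((tendsto_pow_atTop (by have := (mem_Icc.1 hp).1; lia)).comp hshift)
  have hlog : Tendsto (fun n : ℕ => log ((n : ℝ) + 1 / 2) - log n) atTop (𝓝 0) :=
    (tendsto_log_comp_add_sub_log (1 / 2)).comp tendsto_natCast_atTop_atTop
  have h := ((tendsto_harmonic_sub_log.sub hlog).sub_const eulerMascheroniConstant).sub hsum
  simp only [sum_const_zero, sub_zero, sub_self] at h
  refine h.congr fun n => ?_
  rw [harmonicRemainder]
  ring

lemma harmonicRemainder_sign (r n : ℕ) : 0 < (-1) ^ r * harmonicRemainder r n := by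
  have hanti : StrictAnti fun n => (-1) ^ r * harmonicRemainder r n := by
    refine strictAnti_nat_of_succ_lt fun n => ?_
    have hsign := midpointRemainder_inv_sign
      (by linarith [n.cast_nonneg (α := ℝ)] : (1 / 2 : ℝ) < n + 1) r
    rw [← harmonicRemainder_succ_sub, pow_succ] at hsign
    linarith
  have hlim : Tendsto (fun n => (-1) ^ r * harmonicRemainder r n) atTop (𝓝 0) := by
    simpa using (tendsto_harmonicRemainder r).const_mul ((-1) ^ r)
  exact (hanti.antitone.le_of_tendsto hlim (n + 1)).trans_lt (hanti n.lt_succ_self)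

lemma harmonicRemainder_mul_succ_terms_neg (r n : ℕ) :
    harmonicRemainder r n * harmonicRemainder (r + 1) n < 0 := by
  have hprod := mul_pos (harmonicRemainder_sign r n) (harmonicRemainder_sign (r + 1) n)
  have hsq : ((-1 : ℝ) ^ r) ^ 2 = 1 := by rw [pow_right_comm, neg_one_sq, one_pow]
  linear_combination hprod - harmonicRemainder r n * harmonicRemainder (r + 1) n * hsq

end HarmonicRemainder

end DeTempleWang

theorem detemple_wang_expansion (n : ℕ) (hn : 0 < n) (r : ℕ) (hr : 0 < r) :
    ∃ θ : ℝ, 0 < θ ∧ θ < 1 ∧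
      (harmonic n : ℝ) =
        Real.log (n + 1 / 2) + Real.eulerMascheroniConstant +
          (∑ p ∈ Finset.Icc 1 r, detempleWangCoeff p / (n + 1 / 2 : ℝ) ^ (2 * p)) +
          θ * detempleWangCoeff (r + 1) / (n + 1 / 2 : ℝ) ^ (2 * r + 2) := by
  have hopposite := DeTempleWang.harmonicRemainder_mul_succ_terms_neg r n
  rw [DeTempleWang.harmonicRemainder_succ_terms] at hopposite
  obtain ⟨θ, hpos, hlt, hθ⟩ := DeTempleWang.exists_eq_mul_of_mul_sub_neg hopposite
  refine ⟨θ, hpos, hlt, ?_⟩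
  rw [mul_div_assoc, ← hθ, DeTempleWang.harmonicRemainder, add_sub_cancel]
end
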